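/- arXiv:2509.20296 — 6 statements merged into one kernel-verified Lean document; each statement's English description precedes it below -/
import Mathlib

section
/- Let n ≥ 1, let 1 ≤ p < ∞, and let Ω ⊆ ℝⁿ be a Lebesgue measurable set such that for every R > 0 there exists y ∈ ℝⁿ with B(y,R) ⊆ Ω (Ω contains open balls of arbitrarily large radius). Let a ∈ L^∞(ℝⁿ;ℂ) and suppose there is M ≥ 0 such that ‖F^{-1}(a·Fu)‖_{L^p(ℝⁿ)} ≤ M‖u‖_{L^p(ℝⁿ)} for all u ∈ L²(ℝⁿ) ∩ L^p(ℝⁿ) (i.e., a is a Fourier multiplier on L^p(ℝⁿ)). Then ‖a‖_{L^∞(ℝⁿ)} ≤ sup{ ‖W_Ω(a)u‖_{L^p(Ω)} : u ∈ L²(Ω) ∩ L^p(Ω), ‖u‖_{L^p(Ω)} ≤ 1 }, the supremum being taken in [0,∞]. -/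
open MeasureTheory Filter Metric Complex ENNReal NNReal

noncomputable section

abbrev Eucl (n : ℕ) := EuclideanSpace ℝ (Fin n)

/-- The Fourier integral with the convention `(Fu)(ξ) = ∫ u(x) e^{-i x·ξ} dx`. -/
def fourierInt {n : ℕ} (u : Eucl n → ℂ) (ξ : Eucl n) : ℂ :=
  ∫ x : Eucl n, Complex.exp (-(Complex.I * ((inner ℝ x ξ : ℝ) : ℂ))) * u x

/-- The inverse Fourier integral `(F⁻¹u)(x) = (2π)^{-n} ∫ u(ξ) e^{i x·ξ} dξ`. -/
def fourierIntInv {n : ℕ} (u : Eucl n → ℂ) (x : Eucl n) : ℂ :=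
  (((2 * Real.pi) ^ n : ℝ)⁻¹ : ℂ) • ∫ ξ : Eucl n, Complex.exp (Complex.I * ((inner ℝ x ξ : ℝ) : ℂ)) * u ξ

/-- A pair consisting of the Fourier–Plancherel transform on `L²(ℝⁿ;ℂ)` and its inverse:
continuous linear maps on `L²` that are mutually inverse and agree with the Fourier
integral (resp. the inverse Fourier integral) on `L¹ ∩ L²`.  Such a pair exists and is
unique by Plancherel's theorem. -/
structure FourierPlancherelPair (n : ℕ) where
  F : Lp ℂ 2 (volume : Measure (Eucl n)) →L[ℂ] Lp ℂ 2 (volume : Measure (Eucl n))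
  Finv : Lp ℂ 2 (volume : Measure (Eucl n)) →L[ℂ] Lp ℂ 2 (volume : Measure (Eucl n))
  inv_comp : ∀ u, Finv (F u) = u
  comp_inv : ∀ u, F (Finv u) = u
  F_int : ∀ (u : Eucl n → ℂ), Integrable u → ∀ (hu2 : MemLp u 2 (volume : Measure (Eucl n))),
    (F (hu2.toLp u) : Eucl n → ℂ) =ᵐ[volume] fourierInt u
  Finv_int : ∀ (u : Eucl n → ℂ), Integrable u → ∀ (hu2 : MemLp u 2 (volume : Measure (Eucl n))),
    (Finv (hu2.toLp u) : Eucl n → ℂ) =ᵐ[volume] fourierIntInv u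

/-- Multiplication by an `L^∞` function as a map on `L²`. -/
def mulOp {n : ℕ} (a : Eucl n → ℂ) (ha : MemLp a ⊤ (volume : Measure (Eucl n)))
    (v : Lp ℂ 2 (volume : Measure (Eucl n))) : Lp ℂ 2 (volume : Measure (Eucl n)) :=
  (((Lp.memLp v).smul ha : MemLp (a • (v : Eucl n → ℂ)) 2 volume)).toLp _

/-- The Wiener–Hopf type operator `W_Ω(a) u = r_Ω F⁻¹ (a · F(e_Ω u))`, realised as a function
on `ℝⁿ` supported in `Ω` (i.e. `e_Ω W_Ω(a) u`). -/
def WOp {n : ℕ} (FP : FourierPlancherelPair n) (a : Eucl n → ℂ) (ha : MemLp a ⊤ (volume : Measure (Eucl n)))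
    (Ω : Set (Eucl n)) (u : Eucl n → ℂ) (hu : MemLp (Ω.indicator u) 2 (volume : Measure (Eucl n))) :
    Eucl n → ℂ :=
  Ω.indicator (FP.Finv (mulOp a ha (FP.F (hu.toLp _))) : Eucl n → ℂ)

end

/-!
The operator is tested on wave packets `u(x) = e^{i x·ξ₀} φ(ε(x - y))`, where `φ ≠ 0` is smooth
with support in the unit ball and `y` is chosen such that the ball of radius `1/ε` around `y` lies
in `Ω`. Then `u` is supported in `Ω`, and `F⁻¹(a · F u)` is the wave packet, with the same
parameters, of `F⁻¹(a(ξ₀ + ε ·) · F φ)`. Undoing the dilation yields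
`‖F⁻¹(a(ξ₀ + ε ·) · F φ)‖_{L^p(B(0,1))} ≤ ‖W_Ω(a)‖ ‖φ‖_p` for all `ε > 0`. If `ξ₀` is a Lebesgue
point of `a`, then `a(ξ₀ + ε ·) · F φ → a(ξ₀) F φ` in `L¹` as `ε → 0`, hence
`F⁻¹(a(ξ₀ + ε ·) · F φ) → a(ξ₀) φ` pointwise, and Fatou's lemma gives
`|a(ξ₀)| ‖φ‖_p ≤ ‖W_Ω(a)‖ ‖φ‖_p`.
-/

section AffineMap

variable {E : Type*} [NormedAddCommGroup E] [NormedSpace ℝ E]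

theorem preimage_add_smul_closedBall (x₀ : E) {ε : ℝ} (hε : 0 < ε) (L : ℝ) :
    (fun x ↦ x₀ + ε • x) ⁻¹' closedBall x₀ (ε * L) = closedBall 0 L := by
  ext x
  simp [dist_eq_norm, norm_smul, abs_of_pos hε, hε]

variable [MeasurableSpace E] [BorelSpace E]

theorem measurableEmbedding_add_smul (x₀ : E) {ε : ℝ} (hε : ε ≠ 0) :
    MeasurableEmbedding fun x ↦ x₀ + ε • x :=
  ((Homeomorph.smulOfNeZero ε hε).trans (Homeomorph.addLeft x₀)).measurableEmbedding

variable [FiniteDimensional ℝ E] {μ : Measure E} [μ.IsAddHaarMeasure]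
  {F : Type*} [NormedAddCommGroup F]

theorem map_add_smul_addHaar (x₀ : E) {ε : ℝ} (hε : ε ≠ 0) :
    μ.map (fun x ↦ x₀ + ε • x) = ENNReal.ofReal |(ε ^ Module.finrank ℝ E)⁻¹| • μ := by
  have hcomp := Measure.map_map (μ := μ) (measurable_const_add x₀) (measurable_const_smul ε)
  rw [Measure.map_addHaar_smul μ hε, Measure.map_smul, map_add_left_eq_self] at hcomp
  exact hcomp.symm

theorem eLpNorm_comp_add_smul (f : E → F) (x₀ : E) {ε : ℝ} (hε : ε ≠ 0) (p : ℝ≥0∞) :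
    eLpNorm (fun x ↦ f (x₀ + ε • x)) p μ =
      ENNReal.ofReal |(ε ^ Module.finrank ℝ E)⁻¹| ^ (1 / p).toReal * eLpNorm f p μ := by
  have hscale : ENNReal.ofReal |(ε ^ Module.finrank ℝ E)⁻¹| ≠ 0 := by
    simpa using pow_pos (abs_pos.2 hε) _
  rw [← smul_eq_mul, ← eLpNorm_smul_measure_of_ne_zero hscale, ← map_add_smul_addHaar x₀ hε,
    (measurableEmbedding_add_smul x₀ hε).eLpNorm_map_measure]
  rfl

theorem memLp_comp_add_smul {f : E → F} {p : ℝ≥0∞} (hf : MemLp f p μ) (x₀ : E) {ε : ℝ}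
    (hε : ε ≠ 0) : MemLp (fun x ↦ f (x₀ + ε • x)) p μ := by
  refine ((measurableEmbedding_add_smul x₀ hε).memLp_map_measure_iff (g := f)).1 ?_
  rw [map_add_smul_addHaar x₀ hε]
  exact hf.smul_measure ENNReal.ofReal_ne_top

theorem setLIntegral_comp_add_smul_preimage (f : E → ℝ≥0∞) (x₀ : E) {ε : ℝ} (hε : ε ≠ 0)
    (s : Set E) :
    ∫⁻ x in (fun x ↦ x₀ + ε • x) ⁻¹' s, f (x₀ + ε • x) ∂μ =
      ENNReal.ofReal |(ε ^ Module.finrank ℝ E)⁻¹| * ∫⁻ x in s, f x ∂μ := by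
  have hA := measurableEmbedding_add_smul x₀ hε
  rw [← hA.lintegral_map f, ← hA.restrict_map, map_add_smul_addHaar x₀ hε, Measure.restrict_smul,
    lintegral_smul_measure, smul_eq_mul]

theorem setLIntegral_closedBall_comp_add_smul (f : E → ℝ≥0∞) (x₀ : E) {ε L : ℝ} (hε : 0 < ε)
    (hL : 0 < L) :
    ∫⁻ x in closedBall 0 L, f (x₀ + ε • x) ∂μ =
      μ (closedBall 0 L) * ((∫⁻ x in closedBall x₀ (ε * L), f x ∂μ) /
        μ (closedBall x₀ (ε * L))) := by
  have hvol : μ (closedBall 0 L) =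
      ENNReal.ofReal |(ε ^ Module.finrank ℝ E)⁻¹| * μ (closedBall x₀ (ε * L)) := by
    simpa [preimage_add_smul_closedBall x₀ hε] using
      setLIntegral_comp_add_smul_preimage (μ := μ) 1 x₀ hε.ne' (closedBall x₀ (ε * L))
  have hpos : μ (closedBall x₀ (ε * L)) ≠ 0 := (measure_closedBall_pos μ x₀ (by positivity)).ne'
  rw [← preimage_add_smul_closedBall x₀ hε, setLIntegral_comp_add_smul_preimage f x₀ hε.ne',
    preimage_add_smul_closedBall x₀ hε, hvol, mul_assoc,
    ENNReal.mul_div_cancel hpos measure_closedBall_lt_top.ne]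

end AffineMap

section LebesguePoint

open scoped Topology

theorem lintegral_enorm_mul_enorm_le_add_setLIntegral_tsupport {X F G : Type*}
    [TopologicalSpace X] [MeasurableSpace X] [OpensMeasurableSpace X] {μ : Measure X}
    [NormedAddCommGroup F] [NormedAddCommGroup G] {g : X → F} {w v : X → G} {C : ℝ≥0∞} {D : ℝ}
    (hgC : ∀ᵐ x ∂μ, ‖g x‖ₑ ≤ C) (hw : AEStronglyMeasurable w μ) (hv : AEStronglyMeasurable v μ)
    (hvD : ∀ x, ‖v x‖ ≤ D) :
    ∫⁻ x, ‖g x‖ₑ * ‖w x‖ₑ ∂μ ≤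
      C * ∫⁻ x, ‖w x - v x‖ₑ ∂μ + ENNReal.ofReal D * ∫⁻ x in tsupport v, ‖g x‖ₑ ∂μ := by
  have hpointwise : ∀ᵐ x ∂μ, ‖g x‖ₑ * ‖w x‖ₑ ≤
      C * ‖w x - v x‖ₑ + (tsupport v).indicator (fun x ↦ ENNReal.ofReal D * ‖g x‖ₑ) x := by
    filter_upwards [hgC] with x hx
    have hsplit : ‖g x‖ₑ * ‖w x‖ₑ ≤ ‖g x‖ₑ * ‖w x - v x‖ₑ + ‖g x‖ₑ * ‖v x‖ₑ := by
      rw [← mul_add]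
      gcongr
      simpa using enorm_add_le (w x - v x) (v x)
    refine hsplit.trans (add_le_add (mul_le_mul_left hx _) ?_)
    by_cases hxv : x ∈ tsupport v
    · rw [Set.indicator_of_mem hxv, mul_comm, ← ofReal_norm (v x)]
      exact mul_le_mul_left (ENNReal.ofReal_le_ofReal (hvD x)) _
    · simp [image_eq_zero_of_notMem_tsupport hxv]
  have hwv : AEMeasurable (fun x ↦ ‖w x - v x‖ₑ) μ := (hw.sub hv).enorm
  refine (lintegral_mono_ae hpointwise).trans_eq ?_
  rw [lintegral_add_left' (hwv.const_mul C), lintegral_const_mul'' C hwv,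
    lintegral_indicator (isClosed_tsupport v).measurableSet,
    lintegral_const_mul' _ _ ENNReal.ofReal_ne_top]

theorem tendsto_lintegral_enorm_mul_enorm_of_tendsto_setLIntegral {X ι F G : Type*}
    [TopologicalSpace X] [NormalSpace X] [R1Space X] [WeaklyLocallyCompactSpace X]
    [MeasurableSpace X] [BorelSpace X] {μ : Measure X} [μ.Regular]
    [NormedAddCommGroup F] [NormedAddCommGroup G] [NormedSpace ℝ G]
    {l : Filter ι} {g : ι → X → F} {C : ℝ≥0∞} (hC : C ≠ ∞)
    (hgC : ∀ᶠ i in l, ∀ᵐ x ∂μ, ‖g i x‖ₑ ≤ C)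
    (hg : ∀ K, IsCompact K → Tendsto (fun i ↦ ∫⁻ x in K, ‖g i x‖ₑ ∂μ) l (𝓝 0))
    {w : X → G} (hw : Integrable w μ) :
    Tendsto (fun i ↦ ∫⁻ x, ‖g i x‖ₑ * ‖w x‖ₑ ∂μ) l (𝓝 0) := by
  rw [ENNReal.tendsto_nhds_zero]
  intro δ hδ
  have hδC : δ / 2 / (C + 1) ≠ 0 := by simp [hC, hδ.ne']
  obtain ⟨v, hvsupp, hwv, hvcont, hv⟩ := hw.exists_hasCompactSupport_lintegral_sub_le hδC
  obtain ⟨D, hD⟩ := hvcont.bounded_above_of_compact_support hvsupp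
  have hlocal : Tendsto (fun i ↦ ENNReal.ofReal D * ∫⁻ x in tsupport v, ‖g i x‖ₑ ∂μ) l (𝓝 0) := by
    simpa using ENNReal.Tendsto.const_mul (hg _ hvsupp) (.inr ENNReal.ofReal_ne_top)
  filter_upwards [hgC, ENNReal.tendsto_nhds_zero.1 hlocal (δ / 2) (ENNReal.half_pos hδ.ne')]
    with i hiC hi
  calc ∫⁻ x, ‖g i x‖ₑ * ‖w x‖ₑ ∂μ
      ≤ C * ∫⁻ x, ‖w x - v x‖ₑ ∂μ + ENNReal.ofReal D * ∫⁻ x in tsupport v, ‖g i x‖ₑ ∂μ :=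
        lintegral_enorm_mul_enorm_le_add_setLIntegral_tsupport hiC hw.1 hv.1 hD
    _ ≤ (C + 1) * (δ / 2 / (C + 1)) + δ / 2 := add_le_add (mul_le_mul' le_self_add hwv) hi
    _ ≤ δ / 2 + δ / 2 := add_le_add_left ENNReal.mul_div_le _
    _ = δ := ENNReal.add_halves δ

variable {E : Type*} [NormedAddCommGroup E] [NormedSpace ℝ E] [FiniteDimensional ℝ E]
  [MeasurableSpace E] [BorelSpace E] {μ : Measure E} [μ.IsAddHaarMeasure]
  {F : Type*} [NormedAddCommGroup F]

theorem ae_tendsto_setLIntegral_enorm_comp_add_smul_sub {f : E → F} (hf : LocallyIntegrable f μ) :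
    ∀ᵐ x₀ ∂μ, ∀ K, IsCompact K →
      Tendsto (fun ε : ℝ ↦ ∫⁻ x in K, ‖f (x₀ + ε • x) - f x₀‖ₑ ∂μ) (𝓝[>] 0) (𝓝 0) := by
  filter_upwards [(Besicovitch.vitaliFamily μ).ae_tendsto_lintegral_enorm_sub_div hf]
    with x₀ hx₀ K hK
  obtain ⟨L, hL, hKL⟩ := hK.isBounded.subset_closedBall_lt 0 0
  have hradius : Tendsto (fun ε : ℝ ↦ ε * L) (𝓝[>] 0) (𝓝[>] 0) := by
    refine tendsto_nhdsWithin_iff.2 ⟨?_, ?_⟩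
    · simpa using (tendsto_id (x := 𝓝 (0 : ℝ))).mul_const L |>.mono_left nhdsWithin_le_nhds
    · filter_upwards [self_mem_nhdsWithin] with ε hε using mul_pos hε hL
  have haverage := ENNReal.Tendsto.const_mul (a := μ (closedBall 0 L))
    (hx₀.comp ((Besicovitch.tendsto_filterAt μ x₀).comp hradius))
    (.inr measure_closedBall_lt_top.ne)
  rw [mul_zero] at haverage
  refine tendsto_of_tendsto_of_tendsto_of_le_of_le' tendsto_const_nhds haverage
    (.of_forall fun _ ↦ zero_le) ?_
  filter_upwards [self_mem_nhdsWithin] with ε hε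
  calc ∫⁻ x in K, ‖f (x₀ + ε • x) - f x₀‖ₑ ∂μ
      ≤ ∫⁻ x in closedBall 0 L, ‖f (x₀ + ε • x) - f x₀‖ₑ ∂μ := lintegral_mono_set hKL
    _ = _ := setLIntegral_closedBall_comp_add_smul (fun x ↦ ‖f x - f x₀‖ₑ) x₀ hε hL

theorem ae_tendsto_lintegral_enorm_comp_add_smul_sub_mul_enorm {G : Type*}
    [NormedAddCommGroup G] [NormedSpace ℝ G] {f : E → F} (hf : MemLp f ∞ μ) {w : E → G}
    (hw : Integrable w μ) :
    ∀ᵐ x₀ ∂μ, Tendsto (fun ε : ℝ ↦ ∫⁻ x, ‖f (x₀ + ε • x) - f x₀‖ₑ * ‖w x‖ₑ ∂μ)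
      (𝓝[>] 0) (𝓝 0) := by
  filter_upwards [ae_tendsto_setLIntegral_enorm_comp_add_smul_sub (hf.locallyIntegrable le_top)]
    with x₀ hx₀
  refine tendsto_lintegral_enorm_mul_enorm_of_tendsto_setLIntegral
    (C := eLpNorm f ∞ μ + ‖f x₀‖ₑ) (ENNReal.add_ne_top.2 ⟨hf.2.ne, enorm_ne_top⟩) ?_ hx₀ hw
  filter_upwards [self_mem_nhdsWithin] with ε hε
  have hnorm : eLpNorm (fun x ↦ f (x₀ + ε • x)) ∞ μ = eLpNorm f ∞ μ := by
    simp [eLpNorm_comp_add_smul f x₀ (ne_of_gt hε)]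
  filter_upwards [enorm_ae_le_eLpNormEssSup (fun x ↦ f (x₀ + ε • x)) μ] with x hx
  rw [← eLpNorm_exponent_top, hnorm] at hx
  exact enorm_sub_le.trans (add_le_add_left hx _)

end LebesguePoint

section FourierIntegral

open scoped Topology FourierTransform SchwartzMap

variable {n : ℕ}

theorem fourierInt_eq_fourier (u : Eucl n → ℂ) (ξ : Eucl n) :
    fourierInt u ξ = 𝓕 u ((2 * Real.pi)⁻¹ • ξ) := by
  rw [Real.fourier_eq', fourierInt]
  congr 1 with x
  have hphase : -2 * Real.pi * ((2 * Real.pi)⁻¹ * inner ℝ x ξ) = -inner ℝ x ξ := by field_simp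
  rw [smul_eq_mul, inner_smul_right, hphase, ofReal_neg, neg_mul, mul_comm I]

theorem integrable_fourierInt_schwartzMap (φ : 𝓢(Eucl n, ℂ)) : Integrable (fourierInt φ) := by
  simp only [funext (fourierInt_eq_fourier φ), ← SchwartzMap.fourier_coe]
  exact (𝓕 φ).integrable.comp_smul (by positivity)

theorem fourierIntInv_eq_fourierInv (u : Eucl n → ℂ) (x : Eucl n) :
    fourierIntInv u x = 𝓕⁻ (fun η ↦ u ((2 * Real.pi) • η)) x := by
  have hphase : ∀ η : Eucl n, exp ((2 * Real.pi * inner ℝ η x : ℝ) * I) =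
      exp (I * (inner ℝ x ((2 * Real.pi) • η) : ℝ)) := by
    intro η
    rw [inner_smul_right, real_inner_comm, mul_comm I]
  simp only [Real.fourierInv_eq', hphase, smul_eq_mul]
  rw [Measure.integral_comp_smul volume (fun ξ ↦ exp (I * (inner ℝ x ξ : ℝ)) * u ξ),
    finrank_euclideanSpace_fin, abs_of_nonneg (by positivity), fourierIntInv]
  simp

theorem fourierIntInv_fourierInt {f : Eucl n → ℂ} (hcont : Continuous f) (hf : Integrable f)
    (hFf : Integrable (fourierInt f)) : fourierIntInv (fourierInt f) = f := by
  have hfourier : (fun η ↦ fourierInt f ((2 * Real.pi) • η)) = 𝓕 f := by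
    ext η
    rw [fourierInt_eq_fourier, inv_smul_smul₀ (by positivity)]
  ext x
  rw [fourierIntInv_eq_fourierInv, hfourier, hcont.fourierInv_fourier_eq hf]
  exact hfourier ▸ hFf.comp_smul (by positivity)

theorem fourierIntInv_eq_fourierInt_neg (u : Eucl n → ℂ) (x : Eucl n) :
    fourierIntInv u x = (((2 * Real.pi) ^ n : ℝ)⁻¹ : ℂ) • fourierInt u (-x) := by
  simp [fourierIntInv, fourierInt, inner_neg_right, real_inner_comm]

theorem fourierIntInv_const_smul (c : ℂ) (u : Eucl n → ℂ) :
    fourierIntInv (c • u) = c • fourierIntInv u := by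
  ext x
  simp only [fourierIntInv, Pi.smul_apply, mul_smul_comm, integral_smul]
  exact smul_comm _ _ _

theorem integrable_exp_mul {f : Eucl n → ℂ} (hf : Integrable f) (x : Eucl n) :
    Integrable fun ξ ↦ exp (I * (inner ℝ x ξ : ℝ)) * f ξ :=
  hf.bdd_mul (c := 1) (Continuous.aestronglyMeasurable (by fun_prop))
    (.of_forall fun _ ↦ (norm_exp_I_mul_ofReal _).le)

theorem continuous_fourierIntInv {f : Eucl n → ℂ} (hf : Integrable f) :
    Continuous (fourierIntInv f) := by
  refine Continuous.const_smul (M := ℂ) (α := ℂ) ?_ _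
  refine continuous_of_dominated (fun x ↦ (integrable_exp_mul hf x).1) (bound := fun ξ ↦ ‖f ξ‖)
    (fun x ↦ .of_forall fun ξ ↦ ?_) hf.norm (.of_forall fun ξ ↦ by fun_prop)
  rw [norm_mul, norm_exp_I_mul_ofReal, one_mul]

theorem tendsto_fourierIntInv_of_L1 {ι : Type*} {l : Filter ι} {f : ι → Eucl n → ℂ}
    {g : Eucl n → ℂ} (hf : ∀ᶠ i in l, Integrable (f i)) (hg : Integrable g)
    (hfg : Tendsto (fun i ↦ ∫⁻ ξ, ‖f i ξ - g ξ‖ₑ) l (𝓝 0)) (x : Eucl n) :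
    Tendsto (fun i ↦ fourierIntInv (f i) x) l (𝓝 (fourierIntInv g x)) := by
  refine (tendsto_integral_of_L1 _ (integrable_exp_mul hg x).1
    (hf.mono fun i hi ↦ integrable_exp_mul hi x) ?_).const_smul _
  have hunimodular : ∀ ξ : Eucl n, ‖exp (I * (inner ℝ x ξ : ℝ))‖ₑ = 1 :=
    fun ξ ↦ by rw [← ofReal_norm, norm_exp_I_mul_ofReal, ENNReal.ofReal_one]
  simpa only [← mul_sub, enorm_mul, hunimodular, one_mul] using hfg

/-- The wave packet `x ↦ e^{i x·ξ₀} f(ε(x - y))`, the image of `f` under a dilation, a translation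
and a modulation: for small `ε > 0` its Fourier transform concentrates at `ξ₀`. -/
noncomputable def wavePacket (f : Eucl n → ℂ) (ε : ℝ) (y ξ₀ x : Eucl n) : ℂ :=
  exp (I * (inner ℝ x ξ₀ : ℝ)) * f (ε • (x - y))

theorem wavePacket_indicator_ball (f : Eucl n → ℂ) (r : ℝ) {ε : ℝ} (hε : 0 < ε) (y ξ₀ : Eucl n) :
    wavePacket ((ball 0 r).indicator f) ε y ξ₀ =
      (ball y (r / ε)).indicator (wavePacket f ε y ξ₀) := by
  ext x
  have hmem : ε • (x - y) ∈ ball 0 r ↔ x ∈ ball y (r / ε) := by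
    rw [mem_ball_zero_iff, norm_smul, Real.norm_of_nonneg hε.le, mem_ball, dist_eq_norm,
      lt_div_iff₀' hε]
  by_cases hx : x ∈ ball y (r / ε)
  · rw [Set.indicator_of_mem hx, wavePacket, Set.indicator_of_mem (hmem.2 hx), wavePacket]
  · rw [Set.indicator_of_notMem hx, wavePacket, Set.indicator_of_notMem (mt hmem.1 hx), mul_zero]

theorem norm_wavePacket (f : Eucl n → ℂ) (ε : ℝ) (y ξ₀ x : Eucl n) :
    ‖wavePacket f ε y ξ₀ x‖ = ‖f (-(ε • y) + ε • x)‖ := by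
  rw [wavePacket, norm_mul, norm_exp_I_mul_ofReal, one_mul, smul_sub, sub_eq_neg_add]

theorem eLpNorm_wavePacket (f : Eucl n → ℂ) {ε : ℝ} (hε : ε ≠ 0) (y ξ₀ : Eucl n) (p : ℝ≥0∞) :
    eLpNorm (wavePacket f ε y ξ₀) p volume =
      ENNReal.ofReal |(ε ^ n)⁻¹| ^ (1 / p).toReal * eLpNorm f p volume := by
  rw [eLpNorm_congr_norm_ae (.of_forall (norm_wavePacket f ε y ξ₀)), eLpNorm_comp_add_smul _ _ hε,
    finrank_euclideanSpace_fin]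

theorem memLp_wavePacket {f : Eucl n → ℂ} {p : ℝ≥0∞} (hf : MemLp f p volume) {ε : ℝ} (hε : ε ≠ 0)
    (y ξ₀ : Eucl n) : MemLp (wavePacket f ε y ξ₀) p volume := by
  have hcomp := memLp_comp_add_smul hf (-(ε • y)) hε
  refine hcomp.congr_norm ?_ (.of_forall fun x ↦ (norm_wavePacket f ε y ξ₀ x).symm)
  have hmeas := hcomp.1
  simp only [← sub_eq_neg_add, ← smul_sub] at hmeas
  exact (Continuous.aestronglyMeasurable (by fun_prop)).mul hmeas

theorem integral_comp_smul_sub (f : Eucl n → ℂ) (ε : ℝ) (y : Eucl n) :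
    ∫ x, f (ε • (x - y)) = |(ε ^ n)⁻¹| • ∫ x, f x := by
  rw [integral_sub_right_eq_self (fun x ↦ f (ε • x)) y, Measure.integral_comp_smul,
    finrank_euclideanSpace_fin]

theorem fourierInt_wavePacket (f : Eucl n → ℂ) {ε : ℝ} (hε : ε ≠ 0) (y ξ₀ : Eucl n) :
    fourierInt (wavePacket f ε y ξ₀) =
      (|(ε ^ n)⁻¹| * exp (I * (inner ℝ y ξ₀ : ℝ))) •
        wavePacket (fourierInt f) ε⁻¹ ξ₀ (-y) := by
  ext ξ
  let c : ℂ := exp (I * (inner ℝ y ξ₀ : ℝ)) * exp (I * (inner ℝ ξ (-y) : ℝ))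
  let g : Eucl n → ℂ := fun z ↦ exp (-(I * (inner ℝ z (ε⁻¹ • (ξ - ξ₀)) : ℝ))) * f z
  have hphase : ∀ x : Eucl n,
      exp (-(I * (inner ℝ x ξ : ℝ))) * exp (I * (inner ℝ x ξ₀ : ℝ)) =
        c * exp (-(I * (inner ℝ (ε • (x - y)) (ε⁻¹ • (ξ - ξ₀)) : ℝ))) := by
    intro x
    rw [inner_smul_left, inner_smul_right, conj_trivial, mul_inv_cancel_left₀ hε]
    simp only [c, ← exp_add, inner_sub_left, inner_sub_right, inner_neg_right,
      real_inner_comm y ξ, Complex.ofReal_sub, ofReal_neg]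
    ring_nf
  calc fourierInt (wavePacket f ε y ξ₀) ξ
      = ∫ x, c * g (ε • (x - y)) := by
        simp only [fourierInt, wavePacket, g, ← mul_assoc, hphase]
    _ = c * (|(ε ^ n)⁻¹| • ∫ z, g z) := by rw [integral_const_mul, integral_comp_smul_sub g]
    _ = |(ε ^ n)⁻¹| • (c * fourierInt f (ε⁻¹ • (ξ - ξ₀))) := mul_smul_comm _ _ _
    _ = _ := by simp only [Pi.smul_apply, wavePacket, c, smul_eq_mul, real_smul, mul_assoc]

theorem integrable_fourierInt_wavePacket {f : Eucl n → ℂ} (hFf : Integrable (fourierInt f)) {ε : ℝ}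
    (hε : ε ≠ 0) (y ξ₀ : Eucl n) : Integrable (fourierInt (wavePacket f ε y ξ₀)) := by
  rw [fourierInt_wavePacket f hε, ← memLp_one_iff_integrable]
  exact (memLp_wavePacket (memLp_one_iff_integrable.2 hFf) (inv_ne_zero hε) _ _).const_smul _

theorem fourierIntInv_wavePacket (f : Eucl n → ℂ) {ε : ℝ} (hε : ε ≠ 0) (y ξ₀ : Eucl n) :
    fourierIntInv (wavePacket f ε y ξ₀) =
      (|(ε ^ n)⁻¹| * exp (I * (inner ℝ y ξ₀ : ℝ))) •
        wavePacket (fourierIntInv f) ε⁻¹ (-ξ₀) y := by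
  ext x
  have harg : ε⁻¹ • (-x - ξ₀) = -(ε⁻¹ • (x - -ξ₀)) := by module
  simp only [fourierIntInv_eq_fourierInt_neg, fourierInt_wavePacket f hε, Pi.smul_apply, wavePacket,
    harg, inner_neg_neg, smul_eq_mul]
  ring

/-- The integral form of the Fourier multiplier operator `f ↦ F⁻¹(b · F f)` with symbol `b`. -/
noncomputable def multiplierIntegral (b f : Eucl n → ℂ) : Eucl n → ℂ :=
  fourierIntInv (b * fourierInt f)

theorem mul_wavePacket (b f : Eucl n → ℂ) {ε : ℝ} (hε : ε ≠ 0) (y ξ₀ : Eucl n) :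
    b * wavePacket f ε⁻¹ ξ₀ y = wavePacket (fun η ↦ b (ξ₀ + ε • η) * f η) ε⁻¹ ξ₀ y := by
  ext ξ
  simp only [Pi.mul_apply, wavePacket, smul_inv_smul₀ hε, add_sub_cancel]
  ring

theorem multiplierIntegral_wavePacket (b f : Eucl n → ℂ) {ε : ℝ} (hε : ε ≠ 0) (y ξ₀ : Eucl n) :
    multiplierIntegral b (wavePacket f ε y ξ₀) =
      wavePacket (multiplierIntegral (fun η ↦ b (ξ₀ + ε • η)) f) ε y ξ₀ := by
  let c : ℂ := |(ε ^ n)⁻¹| * exp (I * (inner ℝ y ξ₀ : ℝ))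
  let c' : ℂ := |(ε⁻¹ ^ n)⁻¹| * exp (I * (inner ℝ ξ₀ (-y) : ℝ))
  have hscale : ((|(ε ^ n)⁻¹| : ℝ) : ℂ) * ((|(ε⁻¹ ^ n)⁻¹| : ℝ) : ℂ) = 1 := by
    rw [← Complex.ofReal_mul, ← abs_mul]
    simp [hε]
  have hphase : exp (I * (inner ℝ y ξ₀ : ℝ)) * exp (I * (inner ℝ ξ₀ (-y) : ℝ)) = 1 := by
    rw [← exp_add, inner_neg_right, real_inner_comm y ξ₀]
    simp
  calc multiplierIntegral b (wavePacket f ε y ξ₀)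
      = fourierIntInv (c • (b * wavePacket (fourierInt f) ε⁻¹ ξ₀ (-y))) := by
        rw [multiplierIntegral, fourierInt_wavePacket f hε, mul_smul_comm]
    _ = (c * c') • wavePacket (multiplierIntegral (fun η ↦ b (ξ₀ + ε • η)) f) ε y ξ₀ := by
        rw [fourierIntInv_const_smul, mul_wavePacket b _ hε,
          fourierIntInv_wavePacket _ (inv_ne_zero hε), smul_smul, inv_inv, neg_neg]
        rfl
    _ = _ := by rw [mul_mul_mul_comm, hscale, hphase, one_mul, one_smul]

theorem integrable_comp_add_smul_mul {a g : Eucl n → ℂ} (ha : MemLp a ∞ volume)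
    (hg : Integrable g) (ξ₀ : Eucl n) (ε : ℝ) :
    Integrable ((fun η ↦ a (ξ₀ + ε • η)) * g) := by
  refine hg.mul_of_top_right ?_
  rcases eq_or_ne ε 0 with rfl | hε
  · simpa using memLp_top_const (a ξ₀)
  · exact memLp_comp_add_smul ha ξ₀ hε

theorem ae_tendsto_multiplierIntegral_comp_add_smul {a f : Eucl n → ℂ} (ha : MemLp a ∞ volume)
    (hcont : Continuous f) (hf : Integrable f) (hFf : Integrable (fourierInt f)) :
    ∀ᵐ ξ₀ : Eucl n, ∀ x,
      Tendsto (fun ε : ℝ ↦ multiplierIntegral (fun η ↦ a (ξ₀ + ε • η)) f x) (𝓝[>] 0)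
        (𝓝 (a ξ₀ * f x)) := by
  filter_upwards [ae_tendsto_lintegral_enorm_comp_add_smul_sub_mul_enorm ha hFf] with ξ₀ hξ₀ x
  have hlim : fourierIntInv (a ξ₀ • fourierInt f) x = a ξ₀ * f x := by
    rw [fourierIntInv_const_smul, fourierIntInv_fourierInt hcont hf hFf, Pi.smul_apply, smul_eq_mul]
  rw [← hlim]
  refine tendsto_fourierIntInv_of_L1
    (.of_forall fun ε ↦ integrable_comp_add_smul_mul ha hFf ξ₀ ε) (hFf.smul (a ξ₀)) ?_ x
  simpa only [Pi.mul_apply, Pi.smul_apply, smul_eq_mul, ← sub_mul, enorm_mul] using hξ₀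

end FourierIntegral

section WienerHopf

open scoped Topology SchwartzMap

variable {n : ℕ} (FP : FourierPlancherelPair n)

theorem Finv_ae_eq_fourierIntInv {v : Lp ℂ 2 (volume : Measure (Eucl n))} {f : Eucl n → ℂ}
    (hvf : v =ᵐ[volume] f) (hf : Integrable f) : FP.Finv v =ᵐ[volume] fourierIntInv f := by
  have hf2 : MemLp f 2 volume := (memLp_congr_ae hvf).1 (Lp.memLp v)
  have hv : v = hf2.toLp f := Lp.ext (hvf.trans hf2.coeFn_toLp.symm)
  exact hv ▸ FP.Finv_int f hf hf2

variable {a : Eucl n → ℂ} (ha : MemLp a ⊤ volume)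

theorem Finv_mulOp_F_ae_eq_multiplierIntegral {u : Eucl n → ℂ} (hu : Integrable u)
    (hu2 : MemLp u 2 volume) (hFu : Integrable (fourierInt u)) :
    FP.Finv (mulOp a ha (FP.F (hu2.toLp u))) =ᵐ[volume] multiplierIntegral a u := by
  refine Finv_ae_eq_fourierIntInv FP ?_ (hFu.mul_of_top_right ha)
  refine (MemLp.coeFn_toLp _).trans ?_
  filter_upwards [FP.F_int u hu hu2] with ξ hξ
  simp [hξ]

theorem mulOp_smul (c : ℂ) (v : Lp ℂ 2 (volume : Measure (Eucl n))) :
    mulOp a ha (c • v) = c • mulOp a ha v := by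
  have hmulOp (w : Lp ℂ 2 (volume : Measure (Eucl n))) : mulOp a ha w =ᵐ[volume] a • ⇑w :=
    MemLp.coeFn_toLp _
  refine Lp.ext ?_
  filter_upwards [hmulOp (c • v), Lp.coeFn_smul c (mulOp a ha v), Lp.coeFn_smul c v, hmulOp v]
    with x hcv hc hsmul hv
  rw [hcv, hc, Pi.smul_apply, hv, Pi.smul_apply', Pi.smul_apply', hsmul, Pi.smul_apply, smul_comm]

variable {Ω : Set (Eucl n)}

theorem WOp_ae_eq_const_smul {u v : Eucl n → ℂ} (hu : MemLp (Ω.indicator u) 2 volume)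
    (hv : MemLp (Ω.indicator v) 2 volume) {c : ℂ}
    (hvu : Ω.indicator v =ᵐ[volume] c • Ω.indicator u) :
    WOp FP a ha Ω v hv =ᵐ[volume] c • WOp FP a ha Ω u hu := by
  have hLp : hv.toLp _ = c • hu.toLp _ := by
    rw [← MemLp.toLp_const_smul, MemLp.toLp_eq_toLp_iff]
    exact hvu
  filter_upwards [Lp.coeFn_smul c (FP.Finv (mulOp a ha (FP.F (hu.toLp _))))] with x hx
  rw [WOp, hLp, map_smul, mulOp_smul, map_smul, WOp, Pi.smul_apply,
    ← Set.indicator_const_smul_apply]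
  exact Set.indicator_eq_indicator Iff.rfl hx

/-- The norm, in `[0, ∞]`, of the Wiener–Hopf operator `W_Ω(a)` on `L²(Ω) ∩ L^p(Ω)` with respect to
the `L^p(Ω)` norm. -/
noncomputable def WOpNorm (FP : FourierPlancherelPair n) {a : Eucl n → ℂ} (ha : MemLp a ⊤ volume)
    (Ω : Set (Eucl n)) (p : ℝ≥0∞) : ℝ≥0∞ :=
  sSup { t : ℝ≥0∞ |
    ∃ (u : Eucl n → ℂ) (hu2 : MemLp (Ω.indicator u) 2 (volume : Measure (Eucl n))),
      MemLp (Ω.indicator u) p volume ∧ eLpNorm (Ω.indicator u) p volume ≤ 1 ∧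
      t = eLpNorm (WOp FP a ha Ω u hu2) p volume }

theorem eLpNorm_WOp_le {p : ℝ≥0∞} (hp : p ≠ 0) {u : Eucl n → ℂ}
    (hu2 : MemLp (Ω.indicator u) 2 volume) (hup : MemLp (Ω.indicator u) p volume) :
    eLpNorm (WOp FP a ha Ω u hu2) p volume ≤
      WOpNorm FP ha Ω p * eLpNorm (Ω.indicator u) p volume := by
  set N := eLpNorm (Ω.indicator u) p volume with hN
  rcases eq_or_ne N 0 with hN0 | hN0
  · have hu0 : Ω.indicator u =ᵐ[volume] (0 : ℂ) • Ω.indicator u := by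
      simpa using (eLpNorm_eq_zero_iff hup.1 hp).1 hN0
    simp [eLpNorm_congr_ae (WOp_ae_eq_const_smul FP ha hu2 hu2 hu0)]
  have hNtop : N ≠ ∞ := hup.2.ne
  let c : ℂ := N⁻¹.toReal
  have hc : ‖c‖ₑ = N⁻¹ := by
    rw [← ofReal_norm, norm_real, Real.norm_of_nonneg ENNReal.toReal_nonneg,
      ENNReal.ofReal_toReal (ENNReal.inv_ne_top.2 hN0)]
  have hcu : Ω.indicator (c • u) = c • Ω.indicator u := Set.indicator_const_smul Ω c u
  have hcu2 : MemLp (Ω.indicator (c • u)) 2 volume := hcu ▸ hu2.const_smul c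
  have hunit : eLpNorm (Ω.indicator (c • u)) p volume ≤ 1 := by
    rw [hcu, eLpNorm_const_smul, hc, ← hN, ENNReal.inv_mul_cancel hN0 hNtop]
  have hle : eLpNorm (WOp FP a ha Ω (c • u) hcu2) p volume ≤ WOpNorm FP ha Ω p :=
    le_sSup ⟨c • u, hcu2, hcu ▸ hup.const_smul c, hunit, rfl⟩
  rwa [eLpNorm_congr_ae (WOp_ae_eq_const_smul FP ha hu2 hcu2 hcu.eventuallyEq),
    eLpNorm_const_smul, hc, mul_comm, ← div_eq_mul_inv, ENNReal.div_le_iff hN0 hNtop] at hle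

variable {f : Eucl n → ℂ} {p : ℝ≥0∞}

theorem WOp_wavePacket_ae_eq (hf : Integrable f) (hf2 : MemLp f 2 volume)
    (hFf : Integrable (fourierInt f)) {ε : ℝ} (hε : ε ≠ 0) {y ξ₀ : Eucl n}
    (hΩ : Function.support (wavePacket f ε y ξ₀) ⊆ Ω)
    (hu2 : MemLp (Ω.indicator (wavePacket f ε y ξ₀)) 2 volume) :
    WOp FP a ha Ω (wavePacket f ε y ξ₀) hu2 =ᵐ[volume]
      Ω.indicator (wavePacket (multiplierIntegral (fun η ↦ a (ξ₀ + ε • η)) f) ε y ξ₀) := by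
  refine EventuallyEq.indicator ?_
  simp only [Set.indicator_eq_self.2 hΩ]
  rw [← multiplierIntegral_wavePacket a f hε]
  exact Finv_mulOp_F_ae_eq_multiplierIntegral FP ha
    (memLp_one_iff_integrable.1 (memLp_wavePacket (memLp_one_iff_integrable.2 hf) hε y ξ₀))
    (memLp_wavePacket hf2 hε y ξ₀) (integrable_fourierInt_wavePacket hFf hε y ξ₀)

theorem eLpNorm_indicator_multiplierIntegral_le (hp : p ≠ 0) (hf : Integrable f)
    (hf2 : MemLp f 2 volume) (hfp : MemLp f p volume) (hFf : Integrable (fourierInt f)) {r : ℝ}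
    (hfr : Function.support f ⊆ ball 0 r) {ε : ℝ} (hε : 0 < ε) {y : Eucl n}
    (hy : ball y (r / ε) ⊆ Ω) (ξ₀ : Eucl n) :
    eLpNorm ((ball 0 r).indicator (multiplierIntegral (fun η ↦ a (ξ₀ + ε • η)) f)) p volume ≤
      WOpNorm FP ha Ω p * eLpNorm f p volume := by
  let u := wavePacket f ε y ξ₀
  let g := multiplierIntegral (fun η ↦ a (ξ₀ + ε • η)) f
  have hu : Function.support u ⊆ Ω := by
    have hball := wavePacket_indicator_ball f r hε y ξ₀
    rw [Set.indicator_eq_self.2 hfr] at hball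
    exact (Set.indicator_eq_self.1 hball.symm).trans hy
  have huΩ : Ω.indicator u = u := Set.indicator_eq_self.2 hu
  have hu2 : MemLp (Ω.indicator u) 2 volume := huΩ.symm ▸ memLp_wavePacket hf2 hε.ne' y ξ₀
  have hup : MemLp (Ω.indicator u) p volume := huΩ.symm ▸ memLp_wavePacket hfp hε.ne' y ξ₀
  have hle : eLpNorm (wavePacket ((ball 0 r).indicator g) ε y ξ₀) p volume ≤
      WOpNorm FP ha Ω p * eLpNorm u p volume := by
    calc eLpNorm (wavePacket ((ball 0 r).indicator g) ε y ξ₀) p volume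
        = eLpNorm ((ball y (r / ε)).indicator (wavePacket g ε y ξ₀)) p volume := by
          rw [wavePacket_indicator_ball g r hε]
      _ ≤ eLpNorm (Ω.indicator (wavePacket g ε y ξ₀)) p volume :=
          eLpNorm_mono fun x ↦ norm_indicator_le_of_subset hy _ x
      _ = eLpNorm (WOp FP a ha Ω u hu2) p volume :=
          (eLpNorm_congr_ae (WOp_wavePacket_ae_eq FP ha hf hf2 hFf hε.ne' hu hu2)).symm
      _ ≤ WOpNorm FP ha Ω p * eLpNorm (Ω.indicator u) p volume := eLpNorm_WOp_le FP ha hp hu2 hup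
      _ = WOpNorm FP ha Ω p * eLpNorm u p volume := by rw [huΩ]
  rw [eLpNorm_wavePacket _ hε.ne', eLpNorm_wavePacket _ hε.ne', mul_left_comm] at hle
  refine (ENNReal.mul_le_mul_iff_right ?_ ?_).1 hle
  · simp [hε.ne']
  · exact ENNReal.rpow_ne_top_of_nonneg ENNReal.toReal_nonneg ENNReal.ofReal_ne_top

theorem ae_eLpNorm_const_smul_le_WOpNorm_mul (hp : p ≠ 0)
    (hballs : ∀ R : ℝ, 0 < R → ∃ y : Eucl n, ball y R ⊆ Ω) (hcont : Continuous f)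
    (hf : Integrable f) (hf2 : MemLp f 2 volume) (hfp : MemLp f p volume)
    (hFf : Integrable (fourierInt f)) {r : ℝ} (hr : 0 < r)
    (hfr : Function.support f ⊆ ball 0 r) :
    ∀ᵐ ξ₀ : Eucl n,
      eLpNorm (a ξ₀ • f) p volume ≤ WOpNorm FP ha Ω p * eLpNorm f p volume := by
  filter_upwards [ae_tendsto_multiplierIntegral_comp_add_smul ha hcont hf hFf] with ξ₀ hξ₀
  refine Lp.eLpNorm_le_of_ae_tendsto (u := 𝓝[>] (0 : ℝ)) (f := fun ε ↦
    (ball 0 r).indicator (multiplierIntegral (fun η ↦ a (ξ₀ + ε • η)) f)) ?_ (fun ε ↦ ?_)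
    (.of_forall fun x ↦ ?_)
  · filter_upwards [self_mem_nhdsWithin] with ε hε
    obtain ⟨y, hy⟩ := hballs (r / ε) (div_pos hr hε)
    exact eLpNorm_indicator_multiplierIntegral_le FP ha hp hf hf2 hfp hFf hfr hε hy ξ₀
  · have hcontinuous := continuous_fourierIntInv (integrable_comp_add_smul_mul ha hFf ξ₀ ε)
    exact hcontinuous.aestronglyMeasurable.indicator measurableSet_ball
  · by_cases hx : x ∈ ball 0 r
    · simpa only [Set.indicator_of_mem hx, Pi.smul_apply, smul_eq_mul] using hξ₀ x
    · simp [Set.indicator_of_notMem hx, Function.notMem_support.1 (fun h ↦ hx (hfr h))]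

theorem exists_schwartzMap_support_subset_ball (n : ℕ) :
    ∃ φ : 𝓢(Eucl n, ℂ), φ ≠ 0 ∧ Function.support φ ⊆ ball 0 1 := by
  let f : ContDiffBump (0 : Eucl n) := ⟨1 / 2, 1, by norm_num, by norm_num⟩
  have hsmooth : ContDiff ℝ (↑(⊤ : ℕ∞)) fun x ↦ (f x : ℂ) := ofRealCLM.contDiff.comp f.contDiff
  have hcompact : HasCompactSupport fun x ↦ (f x : ℂ) :=
    f.hasCompactSupport.comp_left (g := fun t : ℝ ↦ (t : ℂ)) ofReal_zero
  refine ⟨hcompact.toSchwartzMap hsmooth, fun h ↦ ?_, fun x hx ↦ ?_⟩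
  · have hzero : (f 0 : ℂ) = 0 := DFunLike.congr_fun h 0
    simp [f.eventuallyEq_one.eq_of_nhds] at hzero
  · have hfx : x ∈ Function.support f := fun h ↦ hx (congrArg ofReal h)
    rwa [f.support_eq] at hfx

theorem norm_lower_bound_general (hp : p ≠ 0)
    (hballs : ∀ R : ℝ, 0 < R → ∃ y : Eucl n, ball y R ⊆ Ω) :
    eLpNorm a ⊤ volume ≤ WOpNorm FP ha Ω p := by
  obtain ⟨φ, hφ, hφsupp⟩ := exists_schwartzMap_support_subset_ball n
  have hφ0 : eLpNorm φ p volume ≠ 0 := by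
    rw [Ne, eLpNorm_eq_zero_iff φ.continuous.aestronglyMeasurable hp,
      φ.continuous.ae_eq_iff_eq volume continuous_zero]
    exact fun h ↦ hφ (DFunLike.coe_injective h)
  have hφp : MemLp φ p volume := φ.memLp p volume
  have hbound : ∀ᵐ ξ₀, ‖a ξ₀‖ₑ ≤ WOpNorm FP ha Ω p := by
    filter_upwards [ae_eLpNorm_const_smul_le_WOpNorm_mul FP ha hp hballs φ.continuous φ.integrable
      (φ.memLp 2) hφp (integrable_fourierInt_schwartzMap φ) one_pos hφsupp] with ξ₀ hξ₀
    rw [eLpNorm_const_smul] at hξ₀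
    exact (ENNReal.mul_le_mul_iff_left hφ0 hφp.2.ne).1 hξ₀
  rw [eLpNorm_exponent_top]
  exact eLpNormEssSup_le_of_ae_enorm_bound hbound

end WienerHopf

/-- lower bound for the norm of a Wiener–Hopf type operator on `L^p(Ω)`
when `Ω` contains balls of arbitrarily large radius. -/
theorem norm_lower_bound (n : ℕ) (hn : 1 ≤ n) (p : ℝ≥0∞) (hp1 : 1 ≤ p) (hp : p ≠ ∞)
    (Ω : Set (Eucl n)) (hΩ : MeasurableSet Ω)
    (hballs : ∀ R : ℝ, 0 < R → ∃ y : Eucl n, Metric.ball y R ⊆ Ω)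
    (a : Eucl n → ℂ) (ha : MemLp a ⊤ (volume : Measure (Eucl n)))
    (FP : FourierPlancherelPair n) (M : ℝ) (hM0 : 0 ≤ M)
    (hM : ∀ (u : Eucl n → ℂ) (hu2 : MemLp u 2 (volume : Measure (Eucl n))),
      MemLp u p volume →
      eLpNorm (FP.Finv (mulOp a ha (FP.F (hu2.toLp u))) : Eucl n → ℂ) p volume
        ≤ ENNReal.ofReal M * eLpNorm u p volume) :
    eLpNorm a ⊤ volume ≤
      sSup { t : ℝ≥0∞ |
        ∃ (u : Eucl n → ℂ) (hu2 : MemLp (Ω.indicator u) 2 (volume : Measure (Eucl n))),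
          MemLp (Ω.indicator u) p volume ∧ eLpNorm (Ω.indicator u) p volume ≤ 1 ∧
          t = eLpNorm (WOp FP a ha Ω u hu2) p volume } :=
  norm_lower_bound_general FP ha (one_pos.trans_le hp1).ne' hballs
end

section
/- Let n ≥ 1, 1 < p < ∞, and let w be a weight on ℝⁿ satisfying the Berezhnoi–Muckenhoupt condition for exponent p. Then for every nonempty open cone C ⊆ ℝⁿ with vertex at the origin there exist τ > 1, a constant A ∈ (0,∞), points y_j ∈ C and radii R_j strictly increasing to ∞ such that B(y_j, τR_j) ⊆ C for all j, B(y_j, τR_j) ∩ B(y_k, τR_k) = ∅ for j ≠ k, and (∫_{B(y_j,τR_j)} w(x)^p dx)^{1/p} ≤ A · (∫_{B(y_j,R_j)} w(x)^p dx)^{1/p} for all j ∈ ℕ. -/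
open MeasureTheory Filter Metric ENNReal NNReal

noncomputable section

/-- The Berezhnoi–Muckenhoupt condition for a weight `w : ℝⁿ → [0,∞]` and an exponent
`p ∈ (1,∞)` with conjugate exponent `q`:
`sup_B |B|⁻¹ (∫_B w^p)^{1/p} (∫_B w^{-q})^{1/q} < ∞`, the supremum being over all balls. -/
def BMCondition {n : ℕ} (w : Eucl n → ℝ≥0∞) (p q : ℝ) : Prop :=
  ∃ K : ℝ≥0∞, K ≠ ∞ ∧ ∀ (y : Eucl n) (r : ℝ), 0 < r →
    (volume (ball y r))⁻¹ * (∫⁻ x in ball y r, w x ^ p) ^ (1 / p) *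
      (∫⁻ x in ball y r, (w x)⁻¹ ^ q) ^ (1 / q) ≤ K

/-! If `s ⊆ t` and `(∫_t w^p)^{1/p} (∫_t w^{-q})^{1/q} ≤ K |t|`, then Hölder's inequality applied to
`1 = w * w⁻¹` on `s` gives `|s| (∫_t w^p)^{1/p} ≤ K |t| (∫_s w^p)^{1/p}`. For concentric balls the
ratio `|t| / |s|` depends only on the ratio of the radii, so `w^p dx` is doubling on *every* ball.
It remains to fit disjoint balls into the cone: a small ball around a nonzero point of the cone
generates them under the dilations by powers of two. -/

/-- The Berezhnoi–Muckenhoupt condition `sup_B μ(B)⁻¹ (∫_B w^p dμ)^{1/p} (∫_B w^{-q} dμ)^{1/q} < ∞`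
with respect to an arbitrary measure `μ` on a metric space; for Lebesgue measure on `ℝⁿ` it unfolds
to `BMCondition`. The finiteness of the supremum is expressed by a finite upper bound `K`. -/
def IsBerezhnoiMuckenhoupt {X : Type*} [PseudoMetricSpace X] [MeasurableSpace X] (μ : Measure X)
    (w : X → ℝ≥0∞) (p q : ℝ) : Prop :=
  ∃ K : ℝ≥0∞, K ≠ ∞ ∧ ∀ (y : X) (r : ℝ), 0 < r →
    (μ (ball y r))⁻¹ * (∫⁻ x in ball y r, w x ^ p ∂μ) ^ (1 / p) *
      (∫⁻ x in ball y r, (w x)⁻¹ ^ q ∂μ) ^ (1 / q) ≤ K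

section Holder

variable {X : Type*} [MeasurableSpace X] {μ : Measure X} {w : X → ℝ≥0∞} {p q : ℝ}

lemma measure_univ_le_lintegral_rpow_mul_lintegral_inv_rpow (hpq : p.HolderConjugate q)
    (hwmeas : AEMeasurable w μ) (hw : ∀ᵐ x ∂μ, 0 < w x ∧ w x < ∞) :
    μ Set.univ ≤ (∫⁻ x, w x ^ p ∂μ) ^ (1 / p) * (∫⁻ x, (w x)⁻¹ ^ q ∂μ) ^ (1 / q) :=
  calc μ Set.univ = ∫⁻ x, (w * w⁻¹) x ∂μ := by
        rw [← lintegral_one]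
        refine lintegral_congr_ae ?_
        filter_upwards [hw] with x hx
        exact (ENNReal.mul_inv_cancel hx.1.ne' hx.2.ne).symm
    _ ≤ _ := ENNReal.lintegral_mul_le_Lp_mul_Lq μ hpq hwmeas hwmeas.inv

lemma setLIntegral_rpow_mul_measure_le_of_subset (hpq : p.HolderConjugate q)
    (hwmeas : AEMeasurable w μ) (hw : ∀ᵐ x ∂μ, 0 < w x ∧ w x < ∞) {s t : Set X} (hst : s ⊆ t)
    {K : ℝ≥0∞} (hK : (∫⁻ x in t, w x ^ p ∂μ) ^ (1 / p) * (∫⁻ x in t, (w x)⁻¹ ^ q ∂μ) ^ (1 / q)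
      ≤ K * μ t) :
    (∫⁻ x in t, w x ^ p ∂μ) ^ (1 / p) * μ s ≤ K * μ t * (∫⁻ x in s, w x ^ p ∂μ) ^ (1 / p) := by
  have hq : 0 ≤ 1 / q := hpq.symm.one_div_nonneg
  have holder : μ s ≤
      (∫⁻ x in s, w x ^ p ∂μ) ^ (1 / p) * (∫⁻ x in s, (w x)⁻¹ ^ q ∂μ) ^ (1 / q) := by
    simpa only [Measure.restrict_apply_univ] using
      measure_univ_le_lintegral_rpow_mul_lintegral_inv_rpow hpq hwmeas.restrict
        (ae_restrict_of_ae (s := s) hw)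
  calc (∫⁻ x in t, w x ^ p ∂μ) ^ (1 / p) * μ s
      ≤ (∫⁻ x in t, w x ^ p ∂μ) ^ (1 / p) *
          ((∫⁻ x in s, w x ^ p ∂μ) ^ (1 / p) * (∫⁻ x in t, (w x)⁻¹ ^ q ∂μ) ^ (1 / q)) := by
        refine mul_le_mul_right (holder.trans ?_) _
        gcongr
    _ = (∫⁻ x in t, w x ^ p ∂μ) ^ (1 / p) * (∫⁻ x in t, (w x)⁻¹ ^ q ∂μ) ^ (1 / q) *
          (∫⁻ x in s, w x ^ p ∂μ) ^ (1 / p) := by ring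
    _ ≤ K * μ t * (∫⁻ x in s, w x ^ p ∂μ) ^ (1 / p) := by gcongr

end Holder

lemma IsBerezhnoiMuckenhoupt.exists_doubling {E : Type*} [NormedAddCommGroup E] [NormedSpace ℝ E]
    [FiniteDimensional ℝ E] [MeasurableSpace E] [BorelSpace E] {μ : Measure E} [μ.IsAddHaarMeasure]
    {w : E → ℝ≥0∞} {p q : ℝ} (hBM : IsBerezhnoiMuckenhoupt μ w p q) (hpq : p.HolderConjugate q)
    (hwmeas : AEMeasurable w μ) (hw : ∀ᵐ x ∂μ, 0 < w x ∧ w x < ∞) {τ : ℝ} (hτ : 1 ≤ τ) :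
    ∃ A : ℝ≥0∞, 0 < A ∧ A ≠ ∞ ∧ ∀ (y : E) (r : ℝ), 0 < r →
      (∫⁻ x in ball y (τ * r), w x ^ p ∂μ) ^ (1 / p)
        ≤ A * (∫⁻ x in ball y r, w x ^ p ∂μ) ^ (1 / p) := by
  obtain ⟨K, hK_top, hK⟩ := hBM
  have hτ_pos : 0 < τ := one_pos.trans_le hτ
  set c : ℝ≥0∞ := ENNReal.ofReal (τ ^ Module.finrank ℝ E)
  -- The summand `1` only ensures positivity of the constant.
  refine ⟨K * c + 1, by positivity, by finiteness, fun y r hr ↦ ?_⟩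
  have volume_scaling : μ (ball y (τ * r)) = c * μ (ball y r) := by
    rw [Measure.addHaar_ball_mul_of_pos μ y hτ_pos r, Measure.addHaar_ball_center μ y r]
  have hK_ball : (∫⁻ x in ball y (τ * r), w x ^ p ∂μ) ^ (1 / p) *
      (∫⁻ x in ball y (τ * r), (w x)⁻¹ ^ q ∂μ) ^ (1 / q) ≤ K * μ (ball y (τ * r)) := by
    rw [mul_comm K, ← ENNReal.inv_mul_le_iff
      (measure_ball_pos μ y (by positivity)).ne' measure_ball_lt_top.ne, ← mul_assoc]
    exact hK y (τ * r) (by positivity)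
  have hsub : ball y r ⊆ ball y (τ * r) := ball_subset_ball (le_mul_of_one_le_left hr.le hτ)
  rw [← ENNReal.mul_le_mul_iff_left (measure_ball_pos μ y hr).ne' measure_ball_lt_top.ne]
  calc (∫⁻ x in ball y (τ * r), w x ^ p ∂μ) ^ (1 / p) * μ (ball y r)
      ≤ K * μ (ball y (τ * r)) * (∫⁻ x in ball y r, w x ^ p ∂μ) ^ (1 / p) :=
        setLIntegral_rpow_mul_measure_le_of_subset hpq hwmeas hw hsub hK_ball
    _ = K * c * (∫⁻ x in ball y r, w x ^ p ∂μ) ^ (1 / p) * μ (ball y r) := by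
        rw [volume_scaling]; ring
    _ ≤ (K * c + 1) * (∫⁻ x in ball y r, w x ^ p ∂μ) ^ (1 / p) * μ (ball y r) := by
        gcongr; exact le_self_add

section Cone

variable {E : Type*} [NormedAddCommGroup E] [NormedSpace ℝ E] {C : Set E}

open scoped Pointwise in
lemma ball_smul_subset_of_cone (hcone : ∀ x ∈ C, ∀ α : ℝ, 0 < α → α • x ∈ C) {x : E} {ε : ℝ}
    (hball : ball x ε ⊆ C) {c : ℝ} (hc : 0 < c) : ball (c • x) (c * ε) ⊆ C := by
  have hsmul : c • ball x ε = ball (c • x) (c * ε) := by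
    rw [_root_.smul_ball hc.ne', Real.norm_of_nonneg hc.le]
  rw [← hsmul]
  rintro _ ⟨z, hz, rfl⟩
  exact hcone z (hball hz) c hc

lemma pairwise_disjoint_ball_two_pow_smul {x : E} {ε : ℝ} (hε : 3 * ε ≤ ‖x‖) :
    Pairwise (Function.onFun Disjoint fun j : ℕ ↦ ball ((2 : ℝ) ^ j • x) (2 ^ j * ε)) := by
  refine (pairwise_disjoint_on _).2 fun i j hij ↦ ball_disjoint_ball ?_
  have hpow_pos : (0 : ℝ) < 2 ^ i := by positivity
  have hpow : (2 : ℝ) * 2 ^ i ≤ 2 ^ j := by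
    rw [← pow_succ']
    exact pow_le_pow_right₀ one_le_two hij
  calc (2 : ℝ) ^ i * ε + 2 ^ j * ε = (2 ^ i + 2 ^ j) / 3 * (3 * ε) := by ring
    _ ≤ (2 ^ i + 2 ^ j) / 3 * ‖x‖ := by gcongr
    _ ≤ (2 ^ j - 2 ^ i) * ‖x‖ := by gcongr; linarith
    _ = dist ((2 : ℝ) ^ i • x) ((2 : ℝ) ^ j • x) := by
        rw [dist_comm, dist_eq_norm, ← sub_smul, norm_smul, Real.norm_of_nonneg (by linarith)]

lemma exists_pairwise_disjoint_balls_subset_cone [Nontrivial E] (hCopen : IsOpen C)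
    (hCne : C.Nonempty) (hcone : ∀ x ∈ C, ∀ α : ℝ, 0 < α → α • x ∈ C) {τ : ℝ} (hτ : 0 < τ) :
    ∃ (y : ℕ → E) (R : ℕ → ℝ), (∀ j, y j ∈ C) ∧ (∀ j, 0 < R j) ∧ StrictMono R ∧
      Tendsto R atTop atTop ∧ (∀ j, ball (y j) (τ * R j) ⊆ C) ∧
      Pairwise (Function.onFun Disjoint fun j ↦ ball (y j) (τ * R j)) := by
  have : (nhdsWithin (0 : E) {0}ᶜ).NeBot := Module.punctured_nhds_neBot ℝ E 0
  obtain ⟨x, hxC, hx⟩ : (C ∩ {0}ᶜ).Nonempty :=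
    (dense_compl_singleton 0).inter_open_nonempty C hCopen hCne
  obtain ⟨δ, hδ, hδC⟩ := Metric.isOpen_iff.1 hCopen x hxC
  have hx_norm : 0 < ‖x‖ := norm_pos_iff.2 hx
  obtain ⟨ε, hε, hεC, hεx⟩ : ∃ ε : ℝ, 0 < ε ∧ ball x ε ⊆ C ∧ 3 * ε ≤ ‖x‖ :=
    ⟨min δ (‖x‖ / 3), lt_min hδ (div_pos hx_norm three_pos),
      (ball_subset_ball (min_le_left _ _)).trans hδC, by linarith [min_le_right δ (‖x‖ / 3)]⟩
  have hscale (j : ℕ) : τ * (2 ^ j * (ε / τ)) = 2 ^ j * ε := by field_simp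
  refine ⟨fun j ↦ (2 : ℝ) ^ j • x, fun j ↦ 2 ^ j * (ε / τ), ?_, ?_, ?_, ?_, ?_, ?_⟩
  · exact fun j ↦ hcone x hxC _ (by positivity)
  · exact fun j ↦ by positivity
  · exact (pow_right_strictMono₀ _root_.one_lt_two).mul_const (by positivity)
  · exact (tendsto_pow_atTop_atTop_of_one_lt _root_.one_lt_two).atTop_mul_const (by positivity)
  · intro j
    rw [hscale]
    exact ball_smul_subset_of_cone hcone hεC (by positivity)
  · simpa only [hscale] using pairwise_disjoint_ball_two_pow_smul hεx

end Cone

theorem separated_doubling_on_cone_of_BM_general {E : Type*} [NormedAddCommGroup E]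
    [NormedSpace ℝ E] [FiniteDimensional ℝ E] [Nontrivial E] [MeasurableSpace E] [BorelSpace E]
    {μ : Measure E} [μ.IsAddHaarMeasure] {p q : ℝ} (hpq : p.HolderConjugate q) {w : E → ℝ≥0∞}
    (hwmeas : AEMeasurable w μ) (hw : ∀ᵐ x ∂μ, 0 < w x ∧ w x < ∞)
    (hBM : IsBerezhnoiMuckenhoupt μ w p q) {C : Set E} (hCopen : IsOpen C) (hCne : C.Nonempty)
    (hcone : ∀ x ∈ C, ∀ α : ℝ, 0 < α → α • x ∈ C) {τ : ℝ} (hτ : 1 ≤ τ) :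
    ∃ A : ℝ≥0∞, 0 < A ∧ A ≠ ∞ ∧
      ∃ (y : ℕ → E) (R : ℕ → ℝ),
        (∀ j, y j ∈ C) ∧ (∀ j, 0 < R j) ∧ StrictMono R ∧ Tendsto R atTop atTop ∧
        (∀ j, ball (y j) (τ * R j) ⊆ C) ∧
        (∀ j k, j ≠ k → ball (y j) (τ * R j) ∩ ball (y k) (τ * R k) = ∅) ∧
        ∀ j, (∫⁻ x in ball (y j) (τ * R j), w x ^ p ∂μ) ^ (1 / p)
          ≤ A * (∫⁻ x in ball (y j) (R j), w x ^ p ∂μ) ^ (1 / p) := by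
  obtain ⟨A, hA_pos, hA_top, hdoubling⟩ := hBM.exists_doubling hpq hwmeas hw hτ
  obtain ⟨y, R, hyC, hR_pos, hR_mono, hR_top, hsub, hdisj⟩ :=
    exists_pairwise_disjoint_balls_subset_cone hCopen hCne hcone (one_pos.trans_le hτ)
  exact ⟨A, hA_pos, hA_top, y, R, hyC, hR_pos, hR_mono, hR_top, hsub,
    fun j k hjk ↦ (hdisj hjk).inter_eq, fun j ↦ hdoubling (y j) (R j) (hR_pos j)⟩

/-- if a weight `w` satisfies the Berezhnoi–Muckenhoupt condition for some
exponent `p ∈ (1,∞)`, then every nonempty open cone `C` with vertex at the origin contains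
a sequence of pairwise disjoint balls `B(y_j, τ R_j)` (for some `τ > 1`), with radii
strictly increasing to infinity, on which the weighted measure `w^p dx` is doubling with a
uniform constant `A`. -/
theorem separated_doubling_on_cone_of_BM (n : ℕ) (hn : 1 ≤ n) (p q : ℝ) (hp : 1 < p)
    (hpq : 1 / p + 1 / q = 1) (w : Eucl n → ℝ≥0∞) (hwmeas : Measurable w)
    (hw : ∀ᵐ x : Eucl n, 0 < w x ∧ w x < ∞) (hBM : BMCondition w p q)
    (C : Set (Eucl n)) (hCopen : IsOpen C) (hCne : C.Nonempty)
    (hcone : ∀ x ∈ C, ∀ α : ℝ, 0 < α → α • x ∈ C) :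
    ∃ τ : ℝ, 1 < τ ∧ ∃ A : ℝ≥0∞, 0 < A ∧ A ≠ ∞ ∧
      ∃ (y : ℕ → Eucl n) (R : ℕ → ℝ),
        (∀ j, y j ∈ C) ∧ (∀ j, 0 < R j) ∧ StrictMono R ∧ Tendsto R atTop atTop ∧
        (∀ j, ball (y j) (τ * R j) ⊆ C) ∧
        (∀ j k, j ≠ k → ball (y j) (τ * R j) ∩ ball (y k) (τ * R k) = ∅) ∧
        ∀ j, (∫⁻ x in ball (y j) (τ * R j), w x ^ p) ^ (1 / p)
          ≤ A * (∫⁻ x in ball (y j) (R j), w x ^ p) ^ (1 / p) := by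
  have : NeZero n := ⟨by lia⟩
  have hconj : p.HolderConjugate q := Real.holderConjugate_iff.2 ⟨hp, by simpa using hpq⟩
  exact ⟨2, one_lt_two, separated_doubling_on_cone_of_BM_general hconj hwmeas.aemeasurable hw hBM
    hCopen hCne hcone one_le_two⟩

end
end

section
/- Let n ≥ 1, 1 < p < ∞, and let w be a weight on ℝⁿ satisfying the Berezhnoi–Muckenhoupt condition for exponent p. Then there exist τ > 1 and a constant A ∈ (0,∞) such that for all y ∈ ℝⁿ and all R > 0, (∫_{B(y,τR)} w(x)^p dx)^{1/p} ≤ A · (∫_{B(y,R)} w(x)^p dx)^{1/p}. -/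
open MeasureTheory Filter Metric ENNReal NNReal

noncomputable section

/-!
Hölder's inequality applied to `1 = w * w⁻¹` on a ball `B` bounds `μ(B)` by
`(∫_B w ^ p)^(1/p) * (∫_B w⁻¹ ^ q)^(1/q)`. Enlarging `B` to `τB` in the second factor only, and
bounding that factor by the Berezhnoi–Muckenhoupt condition on `τB`, gives
`(∫_{τB} w ^ p)^(1/p) * μ(B) ≤ K * μ(τB) * (∫_B w ^ p)^(1/p)`, and `μ(τB) / μ(B)` is bounded
because `μ` is doubling.
-/

section Holder

variable {α : Type*} {mα : MeasurableSpace α} {μ : Measure α} {p q : ℝ} {w : α → ℝ≥0∞}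

theorem measure_le_lintegral_rpow_mul_lintegral_inv_rpow (hpq : p.HolderConjugate q)
    (hw_meas : AEMeasurable w μ) (hw : ∀ᵐ x ∂μ, 0 < w x ∧ w x < ∞) (s : Set α) :
    μ s ≤ (∫⁻ x in s, w x ^ p ∂μ) ^ (1 / p) * (∫⁻ x in s, (w x)⁻¹ ^ q ∂μ) ^ (1 / q) := by
  have hw_mul_inv : ∀ᵐ x ∂μ.restrict s, 1 = (w * w⁻¹) x := by
    filter_upwards [ae_restrict_of_ae hw] with x ⟨hpos, hlt⟩
    exact (ENNReal.mul_inv_cancel hpos.ne' hlt.ne).symm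
  calc μ s = ∫⁻ x in s, (w * w⁻¹) x ∂μ := by
        rw [← setLIntegral_one, lintegral_congr_ae hw_mul_inv]
    _ ≤ _ := ENNReal.lintegral_mul_le_Lp_mul_Lq _ hpq hw_meas.restrict hw_meas.inv.restrict

theorem lintegral_rpow_le_mul_of_subset (hpq : p.HolderConjugate q) (hw_meas : AEMeasurable w μ)
    (hw : ∀ᵐ x ∂μ, 0 < w x ∧ w x < ∞) {s t : Set α} (hst : s ⊆ t) (hs : μ s ≠ 0) (ht : μ t ≠ ∞)
    {C K : ℝ≥0∞} (hC : μ t ≤ C * μ s)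
    (hK : (μ t)⁻¹ * (∫⁻ x in t, w x ^ p ∂μ) ^ (1 / p) *
      (∫⁻ x in t, (w x)⁻¹ ^ q ∂μ) ^ (1 / q) ≤ K) :
    (∫⁻ x in t, w x ^ p ∂μ) ^ (1 / p) ≤ K * C * (∫⁻ x in s, w x ^ p ∂μ) ^ (1 / p) := by
  have holder : μ s ≤
      (∫⁻ x in s, w x ^ p ∂μ) ^ (1 / p) * (∫⁻ x in t, (w x)⁻¹ ^ q ∂μ) ^ (1 / q) := by
    refine (measure_le_lintegral_rpow_mul_lintegral_inv_rpow hpq hw_meas hw s).trans ?_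
    gcongr
    exact one_div_nonneg.2 hpq.symm.nonneg
  set a := (∫⁻ x in t, w x ^ p ∂μ) ^ (1 / p)
  set b := (∫⁻ x in t, (w x)⁻¹ ^ q ∂μ) ^ (1 / q)
  set c := (∫⁻ x in s, w x ^ p ∂μ) ^ (1 / p)
  have muckenhoupt : a * b ≤ μ t * K := by
    have ht₀ : μ t ≠ 0 := fun h ↦ hs (measure_mono_null hst h)
    rwa [mul_assoc, ENNReal.inv_mul_le_iff ht₀ ht] at hK
  have hs_top : μ s ≠ ∞ := measure_ne_top_of_subset hst ht
  refine (ENNReal.mul_le_mul_iff_left hs hs_top).1 ?_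
  calc a * μ s ≤ a * (c * b) := by gcongr
    _ = a * b * c := by ring
    _ ≤ μ t * K * c := by gcongr
    _ ≤ C * μ s * K * c := by gcongr
    _ = K * C * c * μ s := by ring

end Holder

section Doubling

variable {X : Type*} [PseudoMetricSpace X] [MeasurableSpace X]

/-- The Berezhnoi–Muckenhoupt condition with respect to a measure `μ` on a metric space. For
`μ = volume` on `Eucl n` it is definitionally `BMCondition`. -/
def MeasureBMCondition (μ : Measure X) (w : X → ℝ≥0∞) (p q : ℝ) : Prop :=
  ∃ K : ℝ≥0∞, K ≠ ∞ ∧ ∀ (y : X) (r : ℝ), 0 < r →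
    (μ (ball y r))⁻¹ * (∫⁻ x in ball y r, w x ^ p ∂μ) ^ (1 / p) *
      (∫⁻ x in ball y r, (w x)⁻¹ ^ q ∂μ) ^ (1 / q) ≤ K

/-- A (globally) doubling measure on a metric space, with dilation factor `τ`: balls have positive
finite measure, and dilating a ball by `τ` multiplies its measure by a bounded factor. Unlike in
`IsUnifLocDoublingMeasure`, the radii are arbitrary. -/
structure IsBallDoubling (μ : Measure X) (τ : ℝ) : Prop where
  measure_ball_ne_zero : ∀ (y : X) (R : ℝ), 0 < R → μ (ball y R) ≠ 0
  measure_ball_ne_top : ∀ (y : X) (R : ℝ), μ (ball y R) ≠ ∞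
  exists_measure_ball_mul_le : ∃ C : ℝ≥0∞, C ≠ ∞ ∧ ∀ (y : X) (R : ℝ), 0 < R →
    μ (ball y (τ * R)) ≤ C * μ (ball y R)

theorem isBallDoubling_addHaar {E : Type*} [NormedAddCommGroup E] [NormedSpace ℝ E]
    [FiniteDimensional ℝ E] [MeasurableSpace E] [BorelSpace E] (μ : Measure E)
    [μ.IsAddHaarMeasure] {τ : ℝ} (hτ : 0 < τ) : IsBallDoubling μ τ where
  measure_ball_ne_zero y _ hR := (measure_ball_pos μ y hR).ne'
  measure_ball_ne_top _ _ := measure_ball_lt_top.ne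
  exists_measure_ball_mul_le := by
    refine ⟨ENNReal.ofReal (τ ^ Module.finrank ℝ E), ofReal_ne_top, fun y R _ ↦ ?_⟩
    rw [Measure.addHaar_ball_mul_of_pos μ y hτ, Measure.addHaar_ball_center μ y R]

theorem strong_doubling_of_BM_general {μ : Measure X} {τ : ℝ} (hτ : 1 ≤ τ)
    (hμ : IsBallDoubling μ τ) {p q : ℝ} (hpq : p.HolderConjugate q) {w : X → ℝ≥0∞}
    (hw_meas : AEMeasurable w μ) (hw : ∀ᵐ x ∂μ, 0 < w x ∧ w x < ∞)
    (hBM : MeasureBMCondition μ w p q) :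
    ∃ A : ℝ≥0∞, 0 < A ∧ A ≠ ∞ ∧ ∀ (y : X) (R : ℝ), 0 < R →
      (∫⁻ x in ball y (τ * R), w x ^ p ∂μ) ^ (1 / p)
        ≤ A * (∫⁻ x in ball y R, w x ^ p ∂μ) ^ (1 / p) := by
  obtain ⟨K, hK, hBM⟩ := hBM
  obtain ⟨C, hC, hdoubling⟩ := hμ.exists_measure_ball_mul_le
  refine ⟨K * C + 1, by positivity, by finiteness, fun y R hR ↦ ?_⟩
  have hsub : ball y R ⊆ ball y (τ * R) := ball_subset_ball (le_mul_of_one_le_left hR.le hτ)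
  have hbound := lintegral_rpow_le_mul_of_subset hpq hw_meas hw hsub
    (hμ.measure_ball_ne_zero y R hR) (hμ.measure_ball_ne_top y (τ * R)) (hdoubling y R hR)
    (hBM y (τ * R) (by positivity))
  exact hbound.trans (by gcongr; exact le_self_add)

end Doubling

/-- a weight satisfying the Berezhnoi–Muckenhoupt condition for some exponent
`p ∈ (1,∞)` has the strong doubling property. -/
theorem strong_doubling_of_BM (n : ℕ) (hn : 1 ≤ n) (p q : ℝ) (hp : 1 < p)
    (hpq : 1 / p + 1 / q = 1) (w : Eucl n → ℝ≥0∞) (hwmeas : Measurable w)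
    (hw : ∀ᵐ x : Eucl n, 0 < w x ∧ w x < ∞) (hBM : BMCondition w p q) :
    ∃ τ : ℝ, 1 < τ ∧ ∃ A : ℝ≥0∞, 0 < A ∧ A ≠ ∞ ∧
      ∀ (y : Eucl n) (R : ℝ), 0 < R →
        (∫⁻ x in ball y (τ * R), w x ^ p) ^ (1 / p)
          ≤ A * (∫⁻ x in ball y R, w x ^ p) ^ (1 / p) :=
  ⟨2, one_lt_two, strong_doubling_of_BM_general one_le_two (isBallDoubling_addHaar volume two_pos)
    (Real.holderConjugate_iff.2 ⟨hp, by simpa using hpq⟩) hwmeas.aemeasurable hw hBM⟩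

end
end

section
/- Let n ≥ 1, let Ω ⊆ ℝⁿ be a measurable set, and let μ be a Borel measure on ℝⁿ with 0 < μ(B) < ∞ for every open ball B. Suppose there exist ρ > 1, a constant S ∈ (0,∞), points y_j ∈ Ω and radii R_j strictly increasing to ∞ such that B(y_j, ρR_j) ⊆ Ω for all j, B(y_j, ρR_j) ∩ B(y_k, ρR_k) = ∅ for j ≠ k, and μ(B(y_j, ρR_j)) ≤ S · μ(B(y_j, R_j)) for all j. Then for every ε > 0 there exist τ > 1, points z_k ∈ Ω and radii r_k strictly increasing to ∞ such that B(z_k, τr_k) ⊆ Ω for all k, B(z_k, τr_k) ∩ B(z_l, τr_l) = ∅ for k ≠ l, and μ(B(z_k, τr_k)) ≤ (1 + ε) · μ(B(z_k, r_k)) for all k ∈ ℕ. -/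
open MeasureTheory Filter Metric ENNReal NNReal

noncomputable section

/-!
Given `c > 1`, choose `N` with `S < c ^ N` and put `τ := ρ ^ (1 / N)`. The radii `τ ^ i * R` with
`i ≤ N` interpolate between `R` and `ρ * R`. If the measure grew by more than a factor `c` at each
of the `N` steps, it would grow by more than `S` in total. So some step has factor at most `c`,
and `τ` is the same for all balls. The radii picked in this way still tend to infinity, so a
subsequence of them is strictly increasing.
-/

section GeometricGrowth

lemma pow_mul_le_of_forall_lt_mul_le_succ {M : Type*} [Monoid M] [Preorder M] [MulLeftMono M]
    {f : ℕ → M} {c : M} {N : ℕ} (hf : ∀ i < N, c * f i ≤ f (i + 1)) : c ^ N * f 0 ≤ f N := by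
  induction N with
  | zero => simp
  | succ N ih =>
    calc c ^ (N + 1) * f 0 = c * (c ^ N * f 0) := by rw [pow_succ', mul_assoc]
      _ ≤ c * f N := mul_le_mul_right (ih fun i hi ↦ hf i (hi.trans N.lt_succ_self)) c
      _ ≤ f (N + 1) := hf N N.lt_succ_self

lemma exists_lt_succ_le_mul_of_le_mul_zero {f : ℕ → ℝ≥0∞} (hf : Monotone f) {c S : ℝ≥0∞} {N : ℕ}
    (hN : N ≠ 0) (hS : S < c ^ N) (hfN : f N ≤ S * f 0) : ∃ i < N, f (i + 1) ≤ c * f i := by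
  have N_pos : 0 < N := Nat.pos_of_ne_zero hN
  rcases eq_or_ne (f 0) 0 with f_zero | f_zero
  · have f_one_le : f 1 ≤ 0 := (hf N_pos).trans (by simpa [f_zero] using hfN)
    exact ⟨0, N_pos, f_one_le.trans zero_le⟩
  rcases eq_or_ne (f 0) ∞ with f_top | f_top
  · have c_ne_zero : c ≠ 0 := by
      rintro rfl
      simp [hN] at hS
    exact ⟨0, N_pos, by simp [f_top, ENNReal.mul_top c_ne_zero]⟩
  by_contra! growth
  have total_growth : c ^ N * f 0 ≤ f N :=
    pow_mul_le_of_forall_lt_mul_le_succ fun i hi ↦ (growth i hi).le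
  have lt_total : S * f 0 < c ^ N * f 0 := ENNReal.mul_lt_mul_left f_zero f_top hS
  exact (total_growth.trans hfN).not_gt lt_total

lemma exists_one_lt_pow_eq {ρ : ℝ} (hρ : 1 < ρ) {N : ℕ} (hN : N ≠ 0) :
    ∃ τ : ℝ, 1 < τ ∧ τ ^ N = ρ :=
  ⟨ρ ^ (N : ℝ)⁻¹, Real.one_lt_rpow hρ (by positivity),
    Real.rpow_inv_natCast_pow (zero_le_one.trans hρ.le) hN⟩

lemma exists_ne_zero_lt_pow {c S : ℝ≥0∞} (hc : 1 < c) (hS : S ≠ ∞) : ∃ N ≠ 0, S < c ^ N :=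
  ((eventually_ne_atTop 0).and <| (ENNReal.tendsto_pow_atTop_nhds_top_iff.2 hc).eventually
    (lt_mem_nhds hS.lt_top)).exists

lemma exists_one_lt_forall_exists_le_mul {ρ : ℝ} (hρ : 1 < ρ) {c S : ℝ≥0∞} (hc : 1 < c)
    (hS : S ≠ ∞) :
    ∃ τ : ℝ, 1 < τ ∧ ∀ (g : ℝ → ℝ≥0∞) (R : ℝ), Monotone g → 0 < R → g (ρ * R) ≤ S * g R →
      ∃ r, R ≤ r ∧ τ * r ≤ ρ * R ∧ g (τ * r) ≤ c * g r := by
  obtain ⟨N, hN, hSN⟩ := exists_ne_zero_lt_pow hc hS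
  obtain ⟨τ, hτ, rfl⟩ := exists_one_lt_pow_eq hρ hN
  refine ⟨τ, hτ, fun g R hg hR hgR ↦ ?_⟩
  have radii_mono : Monotone fun i : ℕ ↦ τ ^ i * R :=
    (pow_right_mono₀ hτ.le).mul_const hR.le
  obtain ⟨i, hi, step⟩ :=
    exists_lt_succ_le_mul_of_le_mul_zero (hg.comp radii_mono) hN hSN (by simpa using hgR)
  have next_radius : τ * (τ ^ i * R) = τ ^ (i + 1) * R := by rw [pow_succ', mul_assoc]
  refine ⟨τ ^ i * R, by simpa using radii_mono i.zero_le, ?_, ?_⟩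
  · exact next_radius.trans_le (radii_mono hi)
  · rw [next_radius]
    exact step

end GeometricGrowth

section SeparatedDoubling

variable {X : Type*} [PseudoMetricSpace X] [MeasurableSpace X]

/-- A sequence of balls `B(y j, R j)`, with radii strictly increasing to infinity, that witnesses
the separated doubling property of `μ` on `Ω` for the dilation factor `ρ` with constant `S`: the
dilated balls lie in `Ω`, are pairwise disjoint and have at most `S` times the measure of the
original ones. The separated doubling constant `S_ρ` is the infimum of all such `S`. -/
structure IsSeparatedDoubling (μ : Measure X) (Ω : Set X) (ρ : ℝ) (S : ℝ≥0∞) (y : ℕ → X)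
    (R : ℕ → ℝ) : Prop where
  center_mem : ∀ j, y j ∈ Ω
  radius_pos : ∀ j, 0 < R j
  strictMono_radius : StrictMono R
  tendsto_radius : Tendsto R atTop atTop
  ball_subset : ∀ j, ball (y j) (ρ * R j) ⊆ Ω
  pairwise_disjoint : Pairwise fun j k ↦ Disjoint (ball (y j) (ρ * R j)) (ball (y k) (ρ * R k))
  measure_ball_le : ∀ j, μ (ball (y j) (ρ * R j)) ≤ S * μ (ball (y j) (R j))

variable {μ : Measure X} {Ω : Set X} {ρ τ : ℝ} {S c : ℝ≥0∞} {y : ℕ → X} {R r : ℕ → ℝ}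

lemma monotone_measure_ball (μ : Measure X) (x : X) : Monotone fun t ↦ μ (ball x t) :=
  fun _ _ hst ↦ measure_mono (ball_subset_ball hst)

lemma IsSeparatedDoubling.exists_subseq_of_le_radius (h : IsSeparatedDoubling μ Ω ρ S y R)
    (hRr : ∀ j, R j ≤ r j) (hrR : ∀ j, τ * r j ≤ ρ * R j)
    (hr : ∀ j, μ (ball (y j) (τ * r j)) ≤ c * μ (ball (y j) (r j))) :
    ∃ φ : ℕ → ℕ, StrictMono φ ∧ IsSeparatedDoubling μ Ω τ c (y ∘ φ) (r ∘ φ) := by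
  have tendsto_r : Tendsto r atTop atTop := tendsto_atTop_mono hRr h.tendsto_radius
  have ball_subset_ball_R (j : ℕ) : ball (y j) (τ * r j) ⊆ ball (y j) (ρ * R j) :=
    ball_subset_ball (hrR j)
  obtain ⟨φ, hφ, r_strictMono⟩ := strictMono_subseq_of_tendsto_atTop tendsto_r
  exact ⟨φ, hφ, {
    center_mem := fun k ↦ h.center_mem (φ k)
    radius_pos := fun k ↦ (h.radius_pos (φ k)).trans_le (hRr (φ k))
    strictMono_radius := r_strictMono
    tendsto_radius := tendsto_r.comp hφ.tendsto_atTop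
    ball_subset := fun k ↦ (ball_subset_ball_R (φ k)).trans (h.ball_subset (φ k))
    pairwise_disjoint := fun k l hkl ↦ (h.pairwise_disjoint (hφ.injective.ne hkl)).mono
      (ball_subset_ball_R (φ k)) (ball_subset_ball_R (φ l))
    measure_ball_le := fun k ↦ hr (φ k) }⟩

theorem separated_doubling_constant_close_to_one_general (h : IsSeparatedDoubling μ Ω ρ S y R)
    (hρ : 1 < ρ) (hS : S ≠ ∞) (hc : 1 < c) :
    ∃ τ : ℝ, 1 < τ ∧ ∃ (φ : ℕ → ℕ) (r : ℕ → ℝ),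
      StrictMono φ ∧ IsSeparatedDoubling μ Ω τ c (y ∘ φ) r := by
  obtain ⟨τ, hτ, exists_radius⟩ := exists_one_lt_forall_exists_le_mul hρ hc hS
  choose r hRr hrR hr using fun j ↦ exists_radius _ (R j) (monotone_measure_ball μ (y j))
    (h.radius_pos j) (h.measure_ball_le j)
  obtain ⟨φ, hφ, hrφ⟩ := h.exists_subseq_of_le_radius hRr hrR hr
  exact ⟨τ, hτ, φ, r ∘ φ, hφ, hrφ⟩

end SeparatedDoubling

/-- if a Borel measure `μ` on `ℝⁿ`, positive and finite on open balls, is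
doubling (with some constant `S`) along a sequence of pairwise disjoint balls
`B(y_j, ρ R_j) ⊆ Ω` with radii strictly increasing to infinity, then for every `ε > 0`
there is `τ > 1` and a sequence of pairwise disjoint balls `B(z_k, τ r_k) ⊆ Ω` with radii
strictly increasing to infinity along which `μ` is doubling with constant `1 + ε`. -/
theorem separated_doubling_constant_close_to_one (n : ℕ) (hn : 1 ≤ n)
    (Ω : Set (Eucl n)) (hΩ : MeasurableSet Ω) (μ : Measure (Eucl n))
    (hμ : ∀ (y : Eucl n) (r : ℝ), 0 < r → 0 < μ (ball y r) ∧ μ (ball y r) < ∞)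
    (ρ : ℝ) (hρ : 1 < ρ) (S : ℝ≥0∞) (hS0 : 0 < S) (hStop : S ≠ ∞)
    (y : ℕ → Eucl n) (R : ℕ → ℝ) (hy : ∀ j, y j ∈ Ω) (hRpos : ∀ j, 0 < R j)
    (hRmono : StrictMono R) (hRtop : Tendsto R atTop atTop)
    (hsub : ∀ j, ball (y j) (ρ * R j) ⊆ Ω)
    (hdisj : ∀ j k, j ≠ k → ball (y j) (ρ * R j) ∩ ball (y k) (ρ * R k) = ∅)
    (hdoub : ∀ j, μ (ball (y j) (ρ * R j)) ≤ S * μ (ball (y j) (R j))) :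
    ∀ ε : ℝ≥0∞, 0 < ε →
      ∃ τ : ℝ, 1 < τ ∧ ∃ (z : ℕ → Eucl n) (r : ℕ → ℝ),
        (∀ k, z k ∈ Ω) ∧ (∀ k, 0 < r k) ∧ StrictMono r ∧ Tendsto r atTop atTop ∧
        (∀ k, ball (z k) (τ * r k) ⊆ Ω) ∧
        (∀ k l, k ≠ l → ball (z k) (τ * r k) ∩ ball (z l) (τ * r l) = ∅) ∧
        ∀ k, μ (ball (z k) (τ * r k)) ≤ (1 + ε) * μ (ball (z k) (r k)) := by
  intro ε hε
  obtain ⟨τ, hτ, φ, r, -, h⟩ := separated_doubling_constant_close_to_one_general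
    ⟨hy, hRpos, hRmono, hRtop, hsub,
      fun j k hjk ↦ Set.disjoint_iff_inter_eq_empty.2 (hdisj j k hjk), hdoub⟩
    hρ hStop (ENNReal.lt_add_right ENNReal.one_ne_top hε.ne')
  exact ⟨τ, hτ, y ∘ φ, r, h.center_mem, h.radius_pos, h.strictMono_radius, h.tendsto_radius,
    h.ball_subset, fun k l hkl ↦ (h.pairwise_disjoint hkl).inter_eq, h.measure_ball_le⟩

end
end

section
/- Let n ≥ 1, let Ω ⊆ ℝⁿ be a measurable set, and let μ be a Borel measure on ℝⁿ with 0 < μ(B) < ∞ for every open ball B. For τ > 1 define D_τ := liminf_{R → ∞} inf{ μ(B(y, τR)) / μ(B(y, R)) : y ∈ ℝⁿ with B(y, τR) ⊆ Ω } ∈ [1, ∞] (with the inner infimum equal to +∞ if no such y exists). If D_ρ < ∞ for some ρ > 1, then inf_{τ > 1} D_τ = 1. -/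
open MeasureTheory Filter Metric ENNReal NNReal

noncomputable section

/-- The weak doubling constant `D_τ` of a measure `μ` relative to a set `Ω`:
`D_τ = liminf_{R → ∞} inf { μ(B(y,τR)) / μ(B(y,R)) : B(y,τR) ⊆ Ω }`,
where the inner infimum is `∞` if there is no admissible `y`. -/
noncomputable def weakDoublingConst {n : ℕ} (μ : Measure (Eucl n)) (Ω : Set (Eucl n))
    (τ : ℝ) : ℝ≥0∞ :=
  Filter.liminf
    (fun R : ℝ => ⨅ (y : Eucl n) (_ : ball y (τ * R) ⊆ Ω),
      μ (ball y (τ * R)) / μ (ball y R)) atTop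

/-!
If `τ ^ N = ρ`, the ratio `μ(B(y, ρR)) / μ(B(y, R))` telescopes into the `N` ratios
`μ(B(y, τ ^ (k + 1) R)) / μ(B(y, τ ^ k R))`, all of whose balls lie in `B(y, ρR) ⊆ Ω`, so one of
them is at most their geometric mean. Hence `D_ρ < a ^ N` implies `D_τ ≤ a`; for finite `D_ρ` and
any `a > 1` the former holds once `N` is large.
-/

theorem exists_div_le_of_div_lt_pow {u : ℕ → ℝ≥0∞} {a : ℝ≥0∞} {N : ℕ} (hN : N ≠ 0)
    (h : u N / u 0 < a ^ N) : ∃ k < N, u (k + 1) / u k ≤ a := by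
  by_contra! hlt
  have mul_lt (k : ℕ) (hk : k < N) : a * u k < u (k + 1) := mul_lt_of_lt_div (hlt k hk)
  have pow_mul_le (k : ℕ) (hk : k ≤ N) : a ^ k * u 0 ≤ u k := by
    induction k with
    | zero => simp
    | succ k ih =>
      calc a ^ (k + 1) * u 0 = a * (a ^ k * u 0) := by rw [pow_succ', mul_assoc]
        _ ≤ a * u k := by gcongr; exact ih (by lia)
        _ ≤ u (k + 1) := (mul_lt k hk).le
  have ha : a ≠ 0 := by
    rintro rfl
    simp [hN] at h
  have u_last_ne_zero : u N ≠ 0 := by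
    obtain ⟨M, rfl⟩ := Nat.exists_eq_succ_of_ne_zero hN
    exact (mul_lt M M.lt_succ_self).ne_bot
  have u_zero_ne_top : u 0 ≠ ∞ := by
    intro h0
    have := mul_lt 0 (Nat.pos_of_ne_zero hN)
    simp [h0, ENNReal.mul_top ha] at this
  exact h.not_ge <| (ENNReal.le_div_iff_mul_le (.inr u_last_ne_zero) (.inl u_zero_ne_top)).2
    (pow_mul_le N le_rfl)

section PseudoMetricSpace

variable {X : Type*} [PseudoMetricSpace X] [MeasurableSpace X]

/-- The smallest growth factor `μ(B(y, τR)) / μ(B(y, R))` at scale `R` over the balls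
`B(y, τR) ⊆ Ω`, equal to `∞` if there is no such ball. -/
def minBallRatio (μ : Measure X) (Ω : Set X) (τ R : ℝ) : ℝ≥0∞ :=
  ⨅ (y : X) (_ : ball y (τ * R) ⊆ Ω), μ (ball y (τ * R)) / μ (ball y R)

/-- The weak doubling constant `D_τ` of a measure on an arbitrary pseudometric space. On `Eucl n` it
is definitionally `weakDoublingConst`. -/
def metricWeakDoublingConst (μ : Measure X) (Ω : Set X) (τ : ℝ) : ℝ≥0∞ :=
  liminf (minBallRatio μ Ω τ) atTop

variable {μ : Measure X} {Ω : Set X} {τ : ℝ}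

theorem exists_minBallRatio_le_of_lt_pow {a : ℝ≥0∞} {N : ℕ} {R : ℝ} (hN : N ≠ 0) (hτ : 1 ≤ τ)
    (hR : 0 ≤ R) (h : minBallRatio μ Ω (τ ^ N) R < a ^ N) :
    ∃ R' ≥ R, minBallRatio μ Ω τ R' ≤ a := by
  obtain ⟨y, hyΩ, hy⟩ : ∃ y, ∃ _ : ball y (τ ^ N * R) ⊆ Ω,
      μ (ball y (τ ^ N * R)) / μ (ball y R) < a ^ N := by
    simpa only [minBallRatio, iInf_lt_iff] using h
  obtain ⟨k, hk, hka⟩ := exists_div_le_of_div_lt_pow (u := fun k ↦ μ (ball y (τ ^ k * R))) hN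
    (by simpa only [pow_zero, one_mul] using hy)
  have hscale : τ * (τ ^ k * R) = τ ^ (k + 1) * R := by rw [pow_succ', mul_assoc]
  have hsub : ball y (τ * (τ ^ k * R)) ⊆ Ω := by
    refine (ball_subset_ball ?_).trans hyΩ
    rw [hscale]
    gcongr
    exact hk
  refine ⟨τ ^ k * R, le_mul_of_one_le_left hR (one_le_pow₀ hτ), (iInf₂_le y hsub).trans ?_⟩
  rwa [hscale]

theorem metricWeakDoublingConst_le_of_lt_pow {a : ℝ≥0∞} {N : ℕ} (hN : N ≠ 0) (hτ : 1 ≤ τ)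
    (h : metricWeakDoublingConst μ Ω (τ ^ N) < a ^ N) : metricWeakDoublingConst μ Ω τ ≤ a := by
  have hfreq : ∃ᶠ R in atTop, minBallRatio μ Ω (τ ^ N) R < a ^ N :=
    frequently_lt_of_liminf_lt (h := h)
  refine liminf_le_of_frequently_le (frequently_atTop.2 fun A ↦ ?_)
  obtain ⟨R, hAR, hR⟩ := frequently_atTop.1 hfreq (max A 0)
  obtain ⟨R', hRR', hR'⟩ :=
    exists_minBallRatio_le_of_lt_pow hN hτ ((le_max_right A 0).trans hAR) hR
  exact ⟨R', (le_max_left A 0).trans (hAR.trans hRR'), hR'⟩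

theorem iInf_metricWeakDoublingConst_le_one {ρ : ℝ} (hρ : 1 < ρ)
    (hfin : metricWeakDoublingConst μ Ω ρ < ∞) :
    ⨅ (τ : ℝ) (_ : 1 < τ), metricWeakDoublingConst μ Ω τ ≤ 1 := by
  refine le_of_forall_gt_imp_ge_of_dense fun a ha ↦ ?_
  have hlarge : ∀ᶠ N : ℕ in atTop, metricWeakDoublingConst μ Ω ρ < a ^ N :=
    (ENNReal.tendsto_pow_atTop_nhds_top_iff.2 ha).eventually (lt_mem_nhds hfin)
  obtain ⟨N, hN, hN0⟩ := (hlarge.and (eventually_ne_atTop 0)).exists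
  have hroot : 1 < ρ ^ (N⁻¹ : ℝ) := Real.one_lt_rpow hρ (by positivity)
  have hroot_pow : (ρ ^ (N⁻¹ : ℝ)) ^ N = ρ :=
    Real.rpow_inv_natCast_pow (zero_le_one.trans hρ.le) hN0
  exact (iInf₂_le _ hroot).trans <|
    metricWeakDoublingConst_le_of_lt_pow hN0 hroot.le (by rwa [hroot_pow])

theorem one_le_metricWeakDoublingConst
    (hμ : ∀ (y : X) (r : ℝ), 0 < r → 0 < μ (ball y r) ∧ μ (ball y r) < ∞) (hτ : 1 ≤ τ) :
    1 ≤ metricWeakDoublingConst μ Ω τ := by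
  refine le_liminf_of_le (h := ?_)
  filter_upwards [eventually_gt_atTop 0] with R hR
  refine le_iInf₂ fun y _ ↦ ?_
  obtain ⟨hpos, hlt_top⟩ := hμ y R hR
  rw [ENNReal.le_div_iff_mul_le (.inl hpos.ne') (.inl hlt_top.ne), one_mul]
  exact measure_mono (ball_subset_ball (le_mul_of_one_le_left hR.le hτ))

theorem weak_doubling_infimum_eq_one_general (Ω : Set X) (μ : Measure X)
    (hμ : ∀ (y : X) (r : ℝ), 0 < r → 0 < μ (ball y r) ∧ μ (ball y r) < ∞)
    (ρ : ℝ) (hρ : 1 < ρ) (hfin : metricWeakDoublingConst μ Ω ρ < ∞) :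
    ⨅ (τ : ℝ) (_ : 1 < τ), metricWeakDoublingConst μ Ω τ = 1 :=
  le_antisymm (iInf_metricWeakDoublingConst_le_one hρ hfin)
    (le_iInf₂ fun _ hτ ↦ one_le_metricWeakDoublingConst hμ hτ.le)

end PseudoMetricSpace

/-- if a Borel measure `μ` on `ℝⁿ`, positive and finite on open balls, has
finite weak doubling constant `D_ρ < ∞` for some `ρ > 1` relative to `Ω`, then
`inf_{τ > 1} D_τ = 1`. -/
theorem weak_doubling_infimum_eq_one (n : ℕ) (hn : 1 ≤ n)
    (Ω : Set (Eucl n)) (hΩ : MeasurableSet Ω) (μ : Measure (Eucl n))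
    (hμ : ∀ (y : Eucl n) (r : ℝ), 0 < r → 0 < μ (ball y r) ∧ μ (ball y r) < ∞)
    (ρ : ℝ) (hρ : 1 < ρ) (hfin : weakDoublingConst μ Ω ρ < ∞) :
    ⨅ (τ : ℝ) (_ : 1 < τ), weakDoublingConst μ Ω τ = 1 := by
  exact weak_doubling_infimum_eq_one_general Ω μ hμ ρ hρ hfin

end
end

section
/- Let n ≥ 1, let 1 ≤ p < ∞, and let w be a weight on ℝⁿ such that w ∈ L^p_loc(ℝⁿ) (∫_E w^p dx < ∞ for every bounded measurable E) and w^{-1} ∈ L^{p'}_loc(ℝⁿ) (for p > 1, ∫_E w^{-p'} dx < ∞ for every bounded measurable E, where 1/p + 1/p' = 1; for p = 1, w^{-1} is essentially bounded on every bounded measurable set). Then the compactly supported infinitely differentiable functions are dense in L^p(ℝⁿ, w): for every measurable f : ℝⁿ → ℂ with ∫_{ℝⁿ} |f(x)w(x)|^p dx < ∞ and every ε > 0 there exists g ∈ C_c^∞(ℝⁿ) with (∫_{ℝⁿ} |(f(x) − g(x))w(x)|^p dx)^{1/p} < ε. -/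
open MeasureTheory Filter Metric ENNReal NNReal Bornology

noncomputable section

/-- The norm of `f` in the weighted Lebesgue space `L^p(ℝⁿ, w)`, i.e.
`(∫ |f(x) w(x)|^p dx)^{1/p}`, computed in `[0,∞]`. -/
noncomputable def wLpNorm {n : ℕ} (f : Eucl n → ℂ) (p : ℝ) (w : Eucl n → ℝ≥0∞) : ℝ≥0∞ :=
  (∫⁻ x : Eucl n, (‖f x‖₊ : ℝ≥0∞) ^ p * w x ^ p) ^ (1 / p)

/-!
The `L^p(w)` norm with respect to `μ` is the `L^p` norm with respect to the measure `w^p μ`, and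
local integrability of `w^p` says exactly that this measure is finite on compact sets. Density of
`C_c^∞` therefore reduces to density in the unweighted `L^p` space of a measure which is finite on
compact sets: approximate first by a compactly supported continuous function, then mollify.
-/

theorem eLpNorm_withDensity_rpow {X G : Type*} [MeasurableSpace X] {μ : Measure X}
    [TopologicalSpace G] [ContinuousENorm G] {p : ℝ} (hp : 0 < p) {w : X → ℝ≥0∞}
    (hw : AEMeasurable w μ) {f : X → G}
    (hf : AEStronglyMeasurable f (μ.withDensity fun x ↦ w x ^ p)) :
    eLpNorm f (ENNReal.ofReal p) (μ.withDensity fun x ↦ w x ^ p) =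
      (∫⁻ x, ‖f x‖ₑ ^ p * w x ^ p ∂μ) ^ (1 / p) := by
  rw [eLpNorm_eq_lintegral_rpow_enorm_toReal (ENNReal.ofReal_pos.2 hp).ne' ENNReal.ofReal_ne_top,
    ENNReal.toReal_ofReal hp.le,
    lintegral_withDensity_eq_lintegral_mul₀' (hw.pow_const p) (hf.enorm.pow_const p)]
  simp only [Pi.mul_apply, mul_comm]

theorem isFiniteMeasureOnCompacts_withDensity {X : Type*} [TopologicalSpace X] [T2Space X]
    [MeasurableSpace X] [OpensMeasurableSpace X] {μ : Measure X} {ρ : X → ℝ≥0∞}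
    (hρ : ∀ K, IsCompact K → ∫⁻ x in K, ρ x ∂μ < ∞) :
    IsFiniteMeasureOnCompacts (μ.withDensity ρ) where
  lt_top_of_isCompact K hK := by
    rw [withDensity_apply ρ hK.measurableSet]
    exact hρ K hK

section SmoothApproximation

variable {E F : Type*} [NormedAddCommGroup E] [NormedSpace ℝ E] [FiniteDimensional ℝ E]
  [MeasurableSpace E] [BorelSpace E] [NormedAddCommGroup F] [NormedSpace ℝ F] {μ : Measure E}

theorem exists_contDiff_hasCompactSupport_eLpNorm_sub_lt [IsFiniteMeasureOnCompacts μ]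
    {p : ℝ≥0∞} (hp : p ≠ ∞) {f : E → F} (hf : MemLp f p μ) {ε : ℝ≥0∞} (hε : ε ≠ 0) :
    ∃ g : E → F, ContDiff ℝ (⊤ : ℕ∞) g ∧ HasCompactSupport g ∧ eLpNorm (f - g) p μ < ε := by
  -- For `p < 1` the triangle inequality fails, so `ε / 2` is replaced by some smaller `η`.
  obtain ⟨η, hη, add_lt⟩ := exists_Lp_half F μ p hε
  obtain ⟨δ, hδ, hδη⟩ := ENNReal.lt_iff_exists_nnreal_btwn.1 hη
  obtain ⟨h, h_supp, hfh, h_cont, h_memLp⟩ :=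
    hf.exists_hasCompactSupport_eLpNorm_sub_le hp hη.ne'
  obtain ⟨g, g_supp, g_smooth, hhg⟩ :=
    h_supp.exist_eLpNorm_sub_le_of_continuous μ (p := p) (NNReal.coe_pos.2 (mod_cast hδ)) h_cont
  refine ⟨g, g_smooth, g_supp, ?_⟩
  rw [ENNReal.ofReal_coe_nnreal] at hhg
  rw [← sub_add_sub_cancel f h g]
  exact add_lt _ _ (hf.sub h_memLp).aestronglyMeasurable
    (h_cont.sub g_smooth.continuous).aestronglyMeasurable hfh (hhg.trans hδη.le)

theorem smooth_compactly_supported_dense_in_weighted_Lp_general {p : ℝ} (hp : 0 < p)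
    {w : E → ℝ≥0∞} (hw : AEMeasurable w μ)
    (hw_loc : ∀ K, IsCompact K → ∫⁻ x in K, w x ^ p ∂μ < ∞)
    {f : E → F} (hf_meas : AEStronglyMeasurable f μ)
    (hf : (∫⁻ x, ‖f x‖ₑ ^ p * w x ^ p ∂μ) ^ (1 / p) < ∞) {ε : ℝ≥0∞} (hε : ε ≠ 0) :
    ∃ g : E → F, ContDiff ℝ (⊤ : ℕ∞) g ∧ HasCompactSupport g ∧
      (∫⁻ x, ‖(f - g) x‖ₑ ^ p * w x ^ p ∂μ) ^ (1 / p) < ε := by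
  have := isFiniteMeasureOnCompacts_withDensity hw_loc
  have hf_meas' : AEStronglyMeasurable f (μ.withDensity fun x ↦ w x ^ p) :=
    hf_meas.mono_ac (withDensity_absolutelyContinuous μ _)
  have hf_memLp : MemLp f (ENNReal.ofReal p) (μ.withDensity fun x ↦ w x ^ p) :=
    ⟨hf_meas', (eLpNorm_withDensity_rpow hp hw hf_meas').trans_lt hf⟩
  obtain ⟨g, g_smooth, g_supp, hfg⟩ :=
    exists_contDiff_hasCompactSupport_eLpNorm_sub_lt ENNReal.ofReal_ne_top hf_memLp hε
  refine ⟨g, g_smooth, g_supp, ?_⟩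
  rwa [eLpNorm_withDensity_rpow hp hw
    (hf_meas'.sub g_smooth.continuous.aestronglyMeasurable)] at hfg

end SmoothApproximation

/-- if `w ∈ L^p_loc(ℝⁿ)` and `w⁻¹ ∈ L^{p'}_loc(ℝⁿ)` (for `p = 1`, `w⁻¹` is
essentially bounded on bounded sets), then `C_c^∞(ℝⁿ)` is dense in the weighted Lebesgue
space `L^p(ℝⁿ, w)`. -/
theorem smooth_compactly_supported_dense_in_weighted_Lp (n : ℕ) (hn : 1 ≤ n)
    (p : ℝ) (hp1 : 1 ≤ p) (w : Eucl n → ℝ≥0∞) (hwmeas : Measurable w)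
    (hw : ∀ᵐ x : Eucl n, 0 < w x ∧ w x < ∞)
    (hwloc : ∀ E : Set (Eucl n), MeasurableSet E → IsBounded E →
      (∫⁻ x in E, w x ^ p) < ∞)
    (hwloc' : 1 < p → ∀ q : ℝ, 1 / p + 1 / q = 1 →
      ∀ E : Set (Eucl n), MeasurableSet E → IsBounded E →
        (∫⁻ x in E, (w x)⁻¹ ^ q) < ∞)
    (hwloc1 : p = 1 → ∀ E : Set (Eucl n), MeasurableSet E → IsBounded E →
      ∃ K : ℝ≥0∞, K ≠ ∞ ∧ ∀ᵐ x ∂(volume.restrict E), (w x)⁻¹ ≤ K)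
    (f : Eucl n → ℂ) (hfmeas : Measurable f) (hf : wLpNorm f p w < ∞) :
    ∀ ε : ℝ, 0 < ε → ∃ g : Eucl n → ℂ, ContDiff ℝ (⊤ : ℕ∞) g ∧ HasCompactSupport g ∧
      wLpNorm (f - g) p w < ENNReal.ofReal ε := by
  intro ε hε
  exact smooth_compactly_supported_dense_in_weighted_Lp_general (zero_lt_one.trans_le hp1)
    hwmeas.aemeasurable (fun K hK ↦ hwloc K hK.measurableSet hK.isBounded)
    hfmeas.aestronglyMeasurable hf (ENNReal.ofReal_pos.2 hε).ne'

end
end
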